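/- Let a ∈ X, let f, g : 𝔹 → ℂ be holomorphic, F(x) = a + f(x)·x and G(x) = a + g(x)·x for x ∈ 𝔹. Assume F is biholomorphic on 𝔹 and G is subordinate to F. Let N ∈ ℕ (N ≥ 1) and P_s(x) = (1/s!)·DˢG(0)(x,…,x) for s ≥ 1. If r ∈ (0,1) satisfies 4r + 4r^N·(N(1−r)+r) ≤ (1−r)², then for every x with ‖x‖ = r, ‖G(x)‖ + Σ_{s≥N} ‖P_s(x)‖ ≤ ‖F(0)‖ + dist(F(0), ∂F(𝔹)), where dist(F(0), ∂F(𝔹)) is the distance from F(0) to the boundary of the image F(𝔹). -/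

import Mathlib

open Metric Set

noncomputable section

/-- A holomorphic map is biholomorphic on an open set `s` if it is holomorphic and injective
on `s` and admits a holomorphic inverse on the image `f '' s`. -/
def IsBiholoOn {E₁ E₂ : Type*} [NormedAddCommGroup E₁] [NormedSpace ℂ E₁]
    [NormedAddCommGroup E₂] [NormedSpace ℂ E₂] (f : E₁ → E₂) (s : Set E₁) : Prop :=
  DifferentiableOn ℂ f s ∧ Set.InjOn f s ∧
    ∃ g : E₂ → E₁, DifferentiableOn ℂ g (f '' s) ∧ ∀ x ∈ s, g (f x) = x

/-- `G` is subordinate to `F` on the unit ball if `G = F ∘ W` for some Schwarz mapping `W`,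
i.e. a holomorphic self-map of the ball fixing the origin. -/
def Subordinate {X : Type*} [NormedAddCommGroup X] [NormedSpace ℂ X]
    (G F : X → X) : Prop :=
  ∃ W : X → X, DifferentiableOn ℂ W (ball (0 : X) 1) ∧
    Set.MapsTo W (ball (0 : X) 1) (ball (0 : X) 1) ∧ W 0 = 0 ∧
    ∀ x ∈ ball (0 : X) 1, G x = F (W x)


namespace BR
open Filter Topology

/-- Taylor coefficient at 0. -/
def co (k : ℕ) (f : ℂ → ℂ) : ℂ := iteratedDeriv k f 0 / (k.factorial : ℂ)

lemma an_id : AnalyticAt ℂ (fun z : ℂ => z) 0 := analyticAt_id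

/-- Formal Taylor series at 0. -/
def ser (f : ℂ → ℂ) : PowerSeries ℂ := PowerSeries.mk fun k => co k f

lemma coeff_ser (k : ℕ) (f : ℂ → ℂ) : PowerSeries.coeff k (ser f) = co k f := by
  simp [ser]

lemma co_zero (f : ℂ → ℂ) : co 0 f = f 0 := by simp [co]

lemma co_one (f : ℂ → ℂ) : co 1 f = deriv f 0 := by simp [co]

lemma ser_congr {f g : ℂ → ℂ} (h : f =ᶠ[𝓝 0] g) : ser f = ser g := by
  ext k
  simp only [coeff_ser, co]
  rw [h.iteratedDeriv_eq k]

lemma co_congr {f g : ℂ → ℂ} (h : f =ᶠ[𝓝 0] g) (k : ℕ) : co k f = co k g := by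
  rw [← coeff_ser, ser_congr h, coeff_ser]

lemma ser_mul {f g : ℂ → ℂ} (hf : AnalyticAt ℂ f 0) (hg : AnalyticAt ℂ g 0) :
    ser (fun z => f z * g z) = ser f * ser g := by
  ext k
  have := iteratedDeriv_fun_mul (n := k) (x := (0:ℂ)) hf.contDiffAt hg.contDiffAt
  simp only [coeff_ser, co, PowerSeries.coeff_mul,
    Finset.Nat.sum_antidiagonal_eq_sum_range_succ_mk, Nat.succ_eq_add_one, this, Finset.sum_div]
  refine Finset.sum_congr rfl fun i hi ↦ ?_
  rw [Nat.cast_choose _ (by grind)]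
  field_simp [Nat.factorial_ne_zero]

lemma ser_add {f g : ℂ → ℂ} (hf : AnalyticAt ℂ f 0) (hg : AnalyticAt ℂ g 0) :
    ser (fun z => f z + g z) = ser f + ser g := by
  ext k
  have := iteratedDeriv_fun_add (n := k) (x := (0:ℂ)) hf.contDiffAt hg.contDiffAt
  simp only [coeff_ser, co, map_add, this, add_div]

lemma ser_const (c : ℂ) : ser (fun _ => c) = PowerSeries.C c := by
  ext k
  simp only [coeff_ser, co, PowerSeries.coeff_C, iteratedDeriv_const]
  split_ifs with h <;> simp [h]

lemma ser_id : ser (fun z => z) = PowerSeries.X := by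
  ext k
  rw [coeff_ser, PowerSeries.coeff_X, co]
  rcases k with _ | _ | k
  · simp
  · simp
  · rw [iteratedDeriv_succ', iteratedDeriv_succ']
    simp

lemma ser_const_mul (c : ℂ) {f : ℂ → ℂ} (hf : AnalyticAt ℂ f 0) :
    ser (fun z => c * f z) = PowerSeries.C c * ser f := by
  rw [ser_mul analyticAt_const hf, ser_const]

lemma ser_pow {f : ℂ → ℂ} (hf : AnalyticAt ℂ f 0) (n : ℕ) :
    ser (fun z => f z ^ n) = ser f ^ n := by
  induction n with
  | zero => simpa using ser_const 1
  | succ n ih =>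
    simp only [pow_succ]
    rw [ser_mul (hf.fun_pow n) hf, ih]

lemma ser_sum {ι : Type*} (s : Finset ι) (f : ι → ℂ → ℂ) (hf : ∀ i ∈ s, AnalyticAt ℂ (f i) 0) :
    ser (fun z => ∑ i ∈ s, f i z) = ∑ i ∈ s, ser (f i) := by
  classical
  induction s using Finset.induction_on with
  | empty => simpa using ser_const 0
  | insert a s ha ih =>
    simp only [Finset.sum_insert ha]
    rw [ser_add (hf a (by simp)), ih (fun i hi => hf i (by simp [hi]))]
    exact Finset.analyticAt_fun_sum _ (fun i hi => hf i (by simp [hi]))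

lemma co_deriv (k : ℕ) (f : ℂ → ℂ) : co k (deriv f) = (k + 1) * co (k + 1) f := by
  rw [co, co, ← iteratedDeriv_succ', Nat.factorial_succ]
  have : (k.factorial : ℂ) ≠ 0 := by exact_mod_cast k.factorial_ne_zero
  have h2 : (k + 1 : ℂ) ≠ 0 := by exact_mod_cast k.succ_ne_zero
  push_cast
  field_simp

/-- coefficient of z times the derivative of f. -/
lemma co_z_deriv (k : ℕ) {f : ℂ → ℂ} (hf : AnalyticAt ℂ f 0) :
    co k (fun z => z * deriv f z) = k * co k f := by
  rw [← coeff_ser, ser_mul an_id hf.deriv, ser_id]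
  rcases k with _ | k
  · simp
  · rw [PowerSeries.coeff_succ_X_mul, coeff_ser, co_deriv]
    push_cast; rfl

lemma taylor_div {f : ℂ → ℂ} (hf : AnalyticAt ℂ f 0) (n : ℕ) :
    ∃ R : ℂ → ℂ, AnalyticAt ℂ R 0 ∧
      ∀ z, f z = ∑ i ∈ Finset.range n, co i f * z ^ i + z ^ n * R z := by
  obtain ⟨R, hR, h⟩ := hf.exists_eq_sum_add_pow_mul n
  refine ⟨R, hR, fun z => ?_⟩
  rw [h z]
  simp only [smul_eq_mul]
  congr 1
  refine Finset.sum_congr rfl fun i _ => ?_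
  rw [co]; ring

/-- composition lemma. -/
lemma co_mul_comp {q g p : ℂ → ℂ} (hq : AnalyticAt ℂ q 0) (hg : AnalyticAt ℂ g 0)
    (hp : AnalyticAt ℂ p 0) (hp0 : p 0 = 0) {k n : ℕ} (hk : k < n) :
    co k (fun z => q z * g (p z)) = ∑ i ∈ Finset.range n, co i g * co k (fun z => q z * p z ^ i) := by
  obtain ⟨R, hR, h⟩ := taylor_div hg n
  have hRp : AnalyticAt ℂ (fun z => R (p z)) 0 := by
    apply AnalyticAt.fun_comp _ hp
    rwa [hp0]
  obtain ⟨p1, hp1, hpe⟩ := taylor_div hp 1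
  simp only [Finset.range_one, Finset.sum_singleton, co_zero, hp0, pow_zero, mul_one, pow_one,
    zero_add] at hpe
  have e : (fun z => q z * g (p z)) = fun z => (∑ i ∈ Finset.range n, co i g * (q z * p z ^ i)) +
      z ^ n * (q z * p1 z ^ n * R (p z)) := by
    funext z
    rw [h (p z), mul_add, Finset.mul_sum]
    congr 1
    · refine Finset.sum_congr rfl fun i _ => by ring
    · nth_rw 1 [hpe z]; ring
  rw [e, ← coeff_ser, ser_add, ser_sum, ser_mul, ser_pow an_id, ser_id, map_add,
    PowerSeries.coeff_X_pow_mul', if_neg (by omega), add_zero, map_sum]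
  · refine Finset.sum_congr rfl fun i _ => ?_
    rw [ser_const_mul, PowerSeries.coeff_C_mul, coeff_ser]
    exact hq.fun_mul (hp.fun_pow i)
  · exact an_id.fun_pow n
  · exact (hq.fun_mul (hp1.fun_pow n)).fun_mul hRp
  · intro i _
    exact analyticAt_const.fun_mul (hq.fun_mul (hp.fun_pow i))
  · exact Finset.analyticAt_fun_sum _
      fun i _ => analyticAt_const.fun_mul (hq.fun_mul (hp.fun_pow i))
  · exact (an_id.fun_pow n).fun_mul ((hq.fun_mul (hp1.fun_pow n)).fun_mul hRp)

lemma ser_z_pow_mul (n : ℕ) {f : ℂ → ℂ} (hf : AnalyticAt ℂ f 0) :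
    ser (fun z => z ^ n * f z) = PowerSeries.X ^ n * ser f := by
  rw [ser_mul (an_id.fun_pow n) hf, ser_pow an_id, ser_id]

end BR

namespace BR
open Filter Topology

lemma toep_poly (T P : Polynomial ℂ) (C : ℝ) (hT : ∀ z : ℂ, ‖z‖ = 1 → ‖T.eval z‖ ≤ C) (n : ℕ) :
    ∑ j ∈ Finset.range n, ‖(T * P).coeff j‖ ^ 2 ≤ C ^ 2 * ∑ i ∈ P.support, ‖P.coeff i‖ ^ 2 := by
  have h1 : ∑ j ∈ Finset.range n, ‖(T * P).coeff j‖ ^ 2 ≤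
      ∑ j ∈ (T * P).support, ‖(T * P).coeff j‖ ^ 2 := by
    have : ∑ j ∈ (T * P).support, ‖(T * P).coeff j‖ ^ 2 =
        ∑ j ∈ Finset.range n ∪ (T * P).support, ‖(T * P).coeff j‖ ^ 2 := by
      apply Finset.sum_subset Finset.subset_union_right
      intro x _ hx
      simp [Polynomial.notMem_support_iff.mp hx]
    rw [this]
    exact Finset.sum_le_sum_of_subset_of_nonneg Finset.subset_union_left
      (fun _ _ _ => by positivity)
  refine h1.trans ?_
  rw [Polynomial.sum_sq_norm_coeff_eq_circleAverage, Polynomial.sum_sq_norm_coeff_eq_circleAverage,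
    ← smul_eq_mul (a := C ^ 2), ← Real.circleAverage_fun_smul]
  apply Real.circleAverage_mono
  · apply Continuous.continuousOn _ |>.circleIntegrable'
    fun_prop
  · apply Continuous.continuousOn _ |>.circleIntegrable'
    fun_prop
  · intro x hx
    have hx1 : ‖x‖ = 1 := by simpa using hx
    rw [Polynomial.eval_mul, norm_mul, mul_pow, smul_eq_mul]
    gcongr
    exact hT x hx1

lemma summable_ser {χ : ℂ → ℂ} (hχ : DifferentiableOn ℂ χ (ball 0 1)) {z : ℂ} (hz : ‖z‖ < 1) :
    HasSum (fun k => co k χ * z ^ k) (χ z) := by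
  have := Complex.hasSum_taylorSeries_on_ball hχ (z := z) (by simpa using hz)
  have e : (fun k => co k χ * z ^ k) = fun n : ℕ => ((n.factorial : ℂ))⁻¹ • (z - 0) ^ n • iteratedDeriv n χ 0 := by
    funext k
    simp only [co, sub_zero, smul_eq_mul]; ring
  rw [e]; exact this

lemma toep_rho {χ : ℂ → ℂ} (hχ : DifferentiableOn ℂ χ (ball 0 1))
    (hb : ∀ z ∈ ball (0:ℂ) 1, ‖χ z‖ ≤ 1) (F : PowerSeries ℂ) (n : ℕ) (ρ : ℝ) (h0 : 0 ≤ ρ)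
    (h1 : ρ < 1) :
    ∑ j ∈ Finset.range n, ‖PowerSeries.coeff j (PowerSeries.rescale (ρ:ℂ) (ser χ) * F)‖ ^ 2
      ≤ ∑ j ∈ Finset.range n, ‖PowerSeries.coeff j F‖ ^ 2 := by
  set A := PowerSeries.rescale (ρ:ℂ) (ser χ) with hA
  have hAc : ∀ k, PowerSeries.coeff k A = ρ ^ k * co k χ := by
    intro k; rw [hA, PowerSeries.coeff_rescale, coeff_ser]
  have hs : Summable (fun k => ‖PowerSeries.coeff k A‖) := by
    have := (summable_ser hχ (z := (ρ:ℂ)) (by simpa [abs_of_nonneg h0] using h1)).summable.norm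
    refine this.congr fun k => ?_
    rw [hAc, mul_comm]
  set η : ℕ → ℝ := fun M => ∑' k, ‖PowerSeries.coeff (k + M) A‖ with hη
  have hηt : Tendsto η atTop (𝓝 0) :=
    tendsto_sum_nat_add (fun k => ‖PowerSeries.coeff k A‖)
  have hsup : ∀ M, ∀ z : ℂ, ‖z‖ = 1 → ‖(PowerSeries.trunc M A).eval z‖ ≤ 1 + η M := by
    intro M z hz
    have hρz : ‖(ρ:ℂ) * z‖ < 1 := by simpa [hz, abs_of_nonneg h0] using h1
    have hsum := summable_ser hχ hρz
    have hsum' : HasSum (fun k => PowerSeries.coeff k A * z ^ k) (χ (ρ * z)) := by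
      convert hsum using 2 with k
      rw [hAc, mul_pow]; ring
    have e1 := hsum'.summable.sum_add_tsum_nat_add M
    rw [hsum'.tsum_eq] at e1
    have e2 : (PowerSeries.trunc M A).eval z =
        ∑ i ∈ Finset.range M, PowerSeries.coeff i A * z ^ i := by
      exact PowerSeries.eval₂_trunc_eq_sum_range z (RingHom.id ℂ) M A
    rw [e2, eq_sub_of_add_eq e1]
    refine (norm_sub_le _ _).trans (add_le_add (hb _ (by simpa using hρz)) ?_)
    refine tsum_of_norm_bounded ((summable_nat_add_iff M).2 hs).hasSum fun i => ?_
    simp [hz]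
  have hmain : ∀ᶠ M in atTop, ∑ j ∈ Finset.range n, ‖PowerSeries.coeff j (A * F)‖ ^ 2
      ≤ (1 + η M) ^ 2 * ∑ j ∈ Finset.range n, ‖PowerSeries.coeff j F‖ ^ 2 := by
    filter_upwards [eventually_ge_atTop n] with M hM
    have := toep_poly (PowerSeries.trunc M A) (PowerSeries.trunc n F) (1 + η M) (hsup M) n
    have e1 : ∑ i ∈ (PowerSeries.trunc n F).support, ‖(PowerSeries.trunc n F).coeff i‖ ^ 2
        = ∑ j ∈ Finset.range n, ‖PowerSeries.coeff j F‖ ^ 2 := by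
      have : ∑ j ∈ Finset.range n, ‖PowerSeries.coeff j F‖ ^ 2 =
          ∑ j ∈ Finset.range n, ‖(PowerSeries.trunc n F).coeff j‖ ^ 2 := by
        refine Finset.sum_congr rfl fun j hj => ?_
        rw [PowerSeries.coeff_trunc, if_pos (Finset.mem_range.mp hj)]
      rw [this]
      apply Finset.sum_subset
      · intro i hi
        rw [Polynomial.mem_support_iff, PowerSeries.coeff_trunc] at hi
        by_contra h
        rw [Finset.mem_range] at h
        simp [h] at hi
      · intro i _ hi
        simp [Polynomial.notMem_support_iff.mp hi]
    rw [e1] at this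
    refine le_trans (le_of_eq ?_) this
    refine Finset.sum_congr rfl fun j hj => ?_
    have hj := Finset.mem_range.mp hj
    rw [PowerSeries.coeff_mul_eq_coeff_trunc_mul_trunc₂ A F (hj.trans_le hM) hj]
    norm_cast
  have hlim : Tendsto (fun M => (1 + η M) ^ 2 * ∑ j ∈ Finset.range n, ‖PowerSeries.coeff j F‖ ^ 2)
      atTop (𝓝 ((1 + 0) ^ 2 * ∑ j ∈ Finset.range n, ‖PowerSeries.coeff j F‖ ^ 2)) :=
    ((hηt.const_add 1).pow 2).mul_const _
  simpa using ge_of_tendsto hlim hmain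

lemma toep {χ : ℂ → ℂ} (hχ : DifferentiableOn ℂ χ (ball 0 1))
    (hb : ∀ z ∈ ball (0:ℂ) 1, ‖χ z‖ ≤ 1) (F : PowerSeries ℂ) (n : ℕ) :
    ∑ j ∈ Finset.range n, ‖PowerSeries.coeff j (ser χ * F)‖ ^ 2
      ≤ ∑ j ∈ Finset.range n, ‖PowerSeries.coeff j F‖ ^ 2 := by
  have hc : Continuous fun ρ : ℝ => ∑ j ∈ Finset.range n,
      ‖PowerSeries.coeff j (PowerSeries.rescale (ρ:ℂ) (ser χ) * F)‖ ^ 2 := by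
    simp only [PowerSeries.coeff_mul, PowerSeries.coeff_rescale]
    fun_prop
  have ht := (hc.tendsto 1).mono_left (nhdsWithin_le_nhds (s := Iio 1))
  simp only [Complex.ofReal_one, PowerSeries.rescale_one, RingHom.id_apply] at ht
  refine le_of_tendsto ht ?_
  filter_upwards [Ioo_mem_nhdsLT (show (0:ℝ) < 1 by norm_num)] with ρ hρ
  exact toep_rho hχ hb F n ρ hρ.1.le hρ.2

/-- Schwarz functions of the unit disc -/
structure Sch (X : ℂ → ℂ) : Prop where
  diff : DifferentiableOn ℂ X (ball 0 1)
  maps : MapsTo X (ball 0 1) (ball 0 1)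
  zero : X 0 = 0

lemma nhds_D : ball (0:ℂ) 1 ∈ 𝓝 (0:ℂ) := ball_mem_nhds _ one_pos

lemma Sch.an {X : ℂ → ℂ} (hX : Sch X) : AnalyticAt ℂ X 0 := hX.diff.analyticAt nhds_D

lemma Sch.div {X : ℂ → ℂ} (hX : Sch X) : ∃ χ : ℂ → ℂ, DifferentiableOn ℂ χ (ball 0 1) ∧
    (∀ z ∈ ball (0:ℂ) 1, ‖χ z‖ ≤ 1) ∧ ∀ z, X z = z * χ z := by
  refine ⟨dslope X 0, ?_, ?_, ?_⟩
  · exact (Complex.differentiableOn_dslope nhds_D).2 hX.diff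
  · intro z hz
    have := Complex.norm_dslope_le_div_of_mapsTo_ball (R₂ := 1) hX.diff
      (by rw [hX.zero]; exact hX.maps.mono_right ball_subset_closedBall) hz
    simpa using this
  · intro z
    have := sub_smul_dslope X 0 z
    simp [hX.zero] at this
    exact this.symm

lemma Sch.comp {X Y : ℂ → ℂ} (hX : Sch X) (hY : Sch Y) : Sch (fun z => X (Y z)) :=
  ⟨hX.diff.fun_comp hY.diff hY.maps, fun _ hz => hX.maps (hY.maps hz), by rw [hY.zero, hX.zero]⟩

lemma an_comp {H X : ℂ → ℂ} (hH : AnalyticAt ℂ H 0) (hX : AnalyticAt ℂ X 0) (h0 : X 0 = 0) :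
    AnalyticAt ℂ (fun z => H (X z)) 0 := by
  apply AnalyticAt.fun_comp _ hX
  rwa [h0]

lemma rogo {X : ℂ → ℂ} (hX : Sch X) (n : ℕ) : ∀ {H : ℂ → ℂ}, AnalyticAt ℂ H 0 →
    ∑ j ∈ Finset.range n, ‖co j (fun z => H (X z))‖ ^ 2 ≤ ∑ j ∈ Finset.range n, ‖co j H‖ ^ 2 := by
  obtain ⟨χ, hχ, hχb, hχe⟩ := hX.div
  have hχa : AnalyticAt ℂ χ 0 := hχ.analyticAt nhds_D
  induction n with
  | zero => intro H _; simp
  | succ n ih =>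
    intro H hH
    obtain ⟨H1, hH1, e⟩ := taylor_div hH 1
    simp only [Finset.range_one, Finset.sum_singleton, co_zero, pow_zero, mul_one, pow_one] at e
    have key : ∀ (K : ℂ → ℂ), AnalyticAt ℂ K 0 → ∀ j, co (j+1) (fun z => H 0 + z * K z) = co j K := by
      intro K hK j
      rw [← coeff_ser, ser_add analyticAt_const (an_id.fun_mul hK), ser_mul an_id hK, ser_id, ser_const,
        map_add, PowerSeries.coeff_succ_X_mul, coeff_ser, PowerSeries.coeff_C]
      simp
    have hH1X := an_comp hH1 hX.an hX.zero
    have e1 : ∀ j, co (j+1) H = co j H1 := by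
      intro j
      rw [← key H1 hH1 j]
      exact co_congr (Eventually.of_forall e) _
    have e2 : ∀ j, co (j+1) (fun z => H (X z)) = co j (fun z => χ z * H1 (X z)) := by
      intro j
      rw [← key _ (hχa.fun_mul hH1X) j]
      refine co_congr (Eventually.of_forall fun z => ?_) _
      rw [e (X z)]
      nth_rw 1 [hχe z]
      ring
    rw [Finset.sum_range_succ', Finset.sum_range_succ']
    simp only [e1, e2, co_zero, hX.zero]
    refine add_le_add ?_ le_rfl
    refine le_trans ?_ (ih hH1)
    have := toep hχ hχb (ser fun z => H1 (X z)) n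
    rw [← ser_mul hχa hH1X] at this
    simpa only [coeff_ser] using this

lemma littlewood {X : ℂ → ℂ} (hX : Sch X) {h : ℂ → ℂ} (hh : AnalyticAt ℂ h 0) (n : ℕ) :
    ‖co (n+1) (fun z => X z * h (X z) ^ 2)‖ ≤ ∑ j ∈ Finset.range (n+1), ‖co j h‖ ^ 2 := by
  obtain ⟨χ, hχ, hχb, hχe⟩ := hX.div
  have hχa : AnalyticAt ℂ χ 0 := hχ.analyticAt nhds_D
  have hhX := an_comp hh hX.an hX.zero
  have e : (fun z => X z * h (X z) ^ 2) = fun z => z * ((χ z * h (X z)) * h (X z)) := by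
    funext z
    nth_rw 1 [hχe z]; ring
  have hA := hχa.fun_mul hhX
  rw [e, ← coeff_ser, ser_mul an_id (hA.fun_mul hhX), ser_id, PowerSeries.coeff_succ_X_mul,
    ser_mul hA hhX, PowerSeries.coeff_mul, Finset.Nat.sum_antidiagonal_eq_sum_range_succ_mk]
  simp only [coeff_ser]
  have h1 : ∑ j ∈ Finset.range (n+1), ‖co j (fun z => χ z * h (X z))‖ ^ 2
      ≤ ∑ j ∈ Finset.range (n+1), ‖co j h‖ ^ 2 := by
    refine le_trans ?_ (rogo hX (n+1) hh)
    have := toep hχ hχb (ser fun z => h (X z)) (n+1)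
    rw [← ser_mul hχa hhX] at this
    simpa only [coeff_ser] using this
  have h2 := rogo hX (n+1) hh
  have h3 : ∑ j ∈ Finset.range (n+1), ‖co (n - j) (fun z => h (X z))‖ ^ 2 =
      ∑ j ∈ Finset.range (n+1), ‖co j (fun z => h (X z))‖ ^ 2 := by
    have := Finset.sum_range_reflect (fun j => ‖co j (fun z => h (X z))‖ ^ 2) (n+1)
    simpa using this
  calc _ ≤ ∑ j ∈ Finset.range (n+1), ‖co j (fun z => χ z * h (X z)) * co (n - j) (fun z => h (X z))‖ :=
        norm_sum_le _ _
    _ ≤ ∑ j ∈ Finset.range (n+1), (‖co j (fun z => χ z * h (X z))‖ ^ 2 / 2 +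
          ‖co (n - j) (fun z => h (X z))‖ ^ 2 / 2) := by
        refine Finset.sum_le_sum fun j _ => ?_
        rw [norm_mul]
        nlinarith [sq_nonneg (‖co j (fun z => χ z * h (X z))‖ - ‖co (n - j) (fun z => h (X z))‖)]
    _ ≤ _ := by
        rw [Finset.sum_add_distrib, ← Finset.sum_div, ← Finset.sum_div, h3]
        linarith

end BR

namespace BR
open Polynomial

/-- Laurent coefficients of the Chebyshev polynomial `U_n (1 - y + y (q + 1/q) / 2)`. -/
def sig : ℕ → ℤ → ℝ[X]
  | 0, k => if k = 0 then 1 else 0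
  | 1, k => 2 * (1 - X) * (if k = 0 then 1 else 0) +
      X * ((if k + 1 = 0 then 1 else 0) + (if k - 1 = 0 then 1 else 0))
  | n + 2, k => 2 * (1 - X) * sig (n + 1) k + X * (sig (n + 1) (k + 1) + sig (n + 1) (k - 1))
      - sig n k

lemma sig_supp (n : ℕ) : ∀ k : ℤ, (n : ℤ) < |k| → sig n k = 0 := by
  induction n using Nat.twoStepInduction with
  | zero => intro k hk; simp [sig]; rintro rfl; simp at hk
  | one =>
    intro k hk
    rw [lt_abs] at hk
    rw [sig, if_neg (by omega), if_neg (by omega), if_neg (by omega)]; simp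
  | more n h1 h2 =>
    intro k hk
    rw [lt_abs] at hk
    push_cast at hk
    rw [sig, h2 k (by rw [lt_abs]; push_cast; omega), h2 (k+1) (by rw [lt_abs]; push_cast; omega),
      h2 (k-1) (by rw [lt_abs]; push_cast; omega), h1 k (by rw [lt_abs]; omega)]
    simp

lemma sig_deriv (n : ℕ) : ∀ k : ℤ, X * derivative (sig n k + sig n (k + 1)) =
    (k : ℝ[X]) * sig n k - ((k : ℝ[X]) + 1) * sig n (k + 1) := by
  induction n using Nat.twoStepInduction with
  | zero =>
    intro k
    simp only [sig]
    split_ifs with h1 h2 h2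
    · omega
    · simp [h1]
    · have : (k : ℝ[X]) + 1 = 0 := by exact_mod_cast h2
      simp [this]
    · simp
  | one =>
    intro k
    simp only [sig]
    by_cases a0 : k = 0
    · subst a0; simp; ring
    by_cases a1 : k = -1
    · subst a1; simp; ring
    by_cases a2 : k = -2
    · subst a2; simp; ring
    by_cases a3 : k = 1
    · subst a3; simp
    rw [if_neg a0, if_neg (by omega : ¬ k + 1 = 0), if_neg (by omega : ¬ k - 1 = 0),
      if_neg (by omega : ¬ k + 1 + 1 = 0), if_neg (by omega : ¬ k + 1 - 1 = 0)]
    simp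
  | more n h1 h2 =>
    intro k
    have a1 := h2 (k+1)
    have a2 := h2 (k-1)
    have a3 := h2 k
    have a4 := h1 k
    rw [show k - 1 + 1 = k by ring] at a2
    simp only [sig, derivative_add, derivative_sub, derivative_mul, derivative_X,
      derivative_one, derivative_ofNat] at *
    rw [show k + 1 - 1 = k by ring]
    push_cast at *
    linear_combination X * a1 + X * a2 + 2 * (1 - X) * a3 - a4

lemma sig_one (n : ℕ) : ∀ k : ℤ, (sig n k + sig n (k+1)).eval 1 =
    if -(n:ℤ) - 1 ≤ k ∧ k ≤ n then 1 else 0 := by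
  induction n using Nat.twoStepInduction with
  | zero =>
    intro k
    simp only [sig]
    split_ifs <;> first | omega | simp
  | one =>
    intro k
    simp only [sig]
    split_ifs <;> first | omega | simp
  | more n h1 h2 =>
    intro k
    have a1 := h2 (k+1)
    have a2 := h2 (k-1)
    have a4 := h1 k
    rw [show k - 1 + 1 = k by ring] at a2
    simp only [sig, eval_add, eval_sub, eval_mul, eval_X, eval_one, eval_ofNat] at *
    rw [show k + 1 - 1 = k by ring]
    have : (if -((n + 2 : ℕ):ℤ) - 1 ≤ k ∧ k ≤ ((n+2 : ℕ) : ℤ) then (1:ℝ) else 0) =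
      (if -((n + 1 : ℕ):ℤ) - 1 ≤ k + 1 ∧ k + 1 ≤ ((n+1 : ℕ) : ℤ) then (1:ℝ) else 0) +
      (if -((n + 1 : ℕ):ℤ) - 1 ≤ k - 1 ∧ k - 1 ≤ ((n+1 : ℕ) : ℤ) then (1:ℝ) else 0) -
      (if -(n:ℤ) - 1 ≤ k ∧ k ≤ n then 1 else 0) := by
      push_cast
      split_ifs <;> first | omega | simp
    rw [this, ← a1, ← a2, ← a4]
    ring

/-! ### trace of symmetric powers -/

section trace
variable {S : Type*} [CommRing S]

/-- trace of the n-th symmetric power of the matrix with row polynomials A, B -/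
def trS (A B : S[X]) (n : ℕ) : S := ∑ j ∈ Finset.range (n+1), (A ^ (n - j) * B ^ j).coeff j

def trL (A B : S[X]) (n : ℕ) : S := ∑ j ∈ Finset.range n, (A ^ (n - (j+1)) * B ^ (j+1)).coeff j

lemma trS_rec (α β γ δ : S) (n : ℕ) :
    trS (C α + C β * X) (C γ + C δ * X) (n + 2) =
      (α + δ) * trS (C α + C β * X) (C γ + C δ * X) (n + 1) -
      (α * δ - β * γ) * trS (C α + C β * X) (C γ + C δ * X) n := by
  set A := C α + C β * X with hA
  set B := C γ + C δ * X with hB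
  have hBn : ∀ n : ℕ, (B ^ n).coeff n = δ ^ n := by
    intro n
    have h : B.natDegree ≤ 1 := by rw [hB]; compute_degree
    have := coeff_pow_of_natDegree_le (m := n) h
    simpa [hB] using this
  have hK : ∀ n, trS A B (n+1) = α * trS A B n + β * trL A B n + δ ^ (n+1) := by
    intro n
    rw [trS, Finset.sum_range_succ, Nat.sub_self, pow_zero, one_mul, hBn]
    congr 1
    rw [trS, trL, Finset.mul_sum, Finset.mul_sum]
    have : ∑ i ∈ Finset.range n, β * (A ^ (n - (i + 1)) * B ^ (i + 1)).coeff i =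
       ∑ i ∈ Finset.range (n+1), β * (X * (A ^ (n - i) * B ^ i)).coeff i := by
      rw [Finset.sum_range_succ']
      simp
    rw [this, ← Finset.sum_add_distrib]
    refine Finset.sum_congr rfl fun j hj => ?_
    have hj := Finset.mem_range.mp hj
    rw [show n + 1 - j = (n - j) + 1 by omega, pow_succ]
    rw [show A ^ (n - j) * A * B ^ j = C α * (A ^ (n - j) * B ^ j) + C β * (X * (A ^ (n - j) * B ^ j)) by
      conv_lhs => rw [mul_assoc, mul_left_comm]
      nth_rw 1 [hA]
      ring]
    rw [coeff_add, coeff_C_mul, coeff_C_mul]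
  have hL : ∀ n, trL A B (n+1) = γ * trS A B n + δ * trL A B n := by
    intro n
    rw [trS, trL, trL, Finset.mul_sum, Finset.mul_sum]
    have : ∑ i ∈ Finset.range n, δ * (A ^ (n - (i + 1)) * B ^ (i + 1)).coeff i =
       ∑ i ∈ Finset.range (n+1), δ * (X * (A ^ (n - i) * B ^ i)).coeff i := by
      rw [Finset.sum_range_succ']
      simp
    rw [this, ← Finset.sum_add_distrib]
    refine Finset.sum_congr rfl fun j hj => ?_
    have hj := Finset.mem_range.mp hj
    rw [show n + 1 - (j + 1) = (n - j) by omega, pow_succ]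
    rw [show A ^ (n - j) * (B ^ j * B) = C γ * (A ^ (n - j) * B ^ j) + C δ * (X * (A ^ (n - j) * B ^ j)) by
      conv_lhs => rw [← mul_assoc, mul_comm]
      nth_rw 1 [hB]
      ring]
    rw [coeff_add, coeff_C_mul, coeff_C_mul]
  rw [hK (n+1), hL n]
  have := hK n
  rw [pow_succ]
  linear_combination -δ * this

/-- homogeneous evaluation -/
def hom (U V : S) (n : ℕ) (P : S[X]) : S := ∑ k ∈ Finset.range (n+1), P.coeff k * U ^ (n - k) * V ^ k

lemma hom_mul (U V α β : S) (n : ℕ) (P : S[X]) (hP : P.natDegree ≤ n) :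
    hom U V (n+1) (P * (C α + C β * X)) = hom U V n P * (α * U + β * V) := by
  have hc : ∀ k, (P * (C α + C β * X)).coeff k = α * P.coeff k + β * (X * P).coeff k := by
    intro k
    rw [show P * (C α + C β * X) = C α * P + C β * (X * P) by ring, coeff_add, coeff_C_mul, coeff_C_mul]
  simp only [hom, hc]
  have e1 : ∑ k ∈ Finset.range (n+1+1), (α * P.coeff k) * U ^ (n + 1 - k) * V ^ k =
      α * U * ∑ k ∈ Finset.range (n+1), P.coeff k * U ^ (n - k) * V ^ k := by
    rw [Finset.sum_range_succ, coeff_eq_zero_of_natDegree_lt (by omega : P.natDegree < n + 1), Finset.mul_sum]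
    simp only [mul_zero, zero_mul, add_zero]
    refine Finset.sum_congr rfl fun k hk => ?_
    have hk := Finset.mem_range.mp hk
    rw [show n + 1 - k = (n - k) + 1 by omega, pow_succ]; ring
  have e2 : ∑ k ∈ Finset.range (n+1+1), (β * (X * P).coeff k) * U ^ (n + 1 - k) * V ^ k =
      β * V * ∑ k ∈ Finset.range (n+1), P.coeff k * U ^ (n - k) * V ^ k := by
    rw [Finset.sum_range_succ', Finset.mul_sum]
    simp only [coeff_X_mul_zero, mul_zero, zero_mul, add_zero, coeff_X_mul]
    refine Finset.sum_congr rfl fun k hk => ?_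
    rw [show n + 1 - (k+1) = n - k by omega, pow_succ]; ring
  simp only [add_mul, Finset.sum_add_distrib]
  rw [e1, e2]; ring

lemma hom_pow (U V α β γ δ : S) (i j : ℕ) :
    hom U V (i + j) ((C α + C β * X) ^ i * (C γ + C δ * X) ^ j) =
      (α * U + β * V) ^ i * (γ * U + δ * V) ^ j := by
  have hd : ∀ a b : S, (C a + C b * X).natDegree ≤ 1 := by intro a b; compute_degree
  induction j with
  | zero =>
    induction i with
    | zero => simp [hom]
    | succ i ih =>
      simp only [pow_zero, mul_one, add_zero] at ih ⊢
      rw [pow_succ, hom_mul, ih, pow_succ]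
      exact (natDegree_pow_le_of_le i (hd _ _)).trans (by simp)
  | succ j ih =>
    rw [pow_succ, ← mul_assoc, ← add_assoc, hom_mul, ih]
    · ring
    · refine natDegree_mul_le.trans (add_le_add ?_ ?_)
      · exact (natDegree_pow_le_of_le i (hd _ _)).trans (by simp)
      · exact (natDegree_pow_le_of_le j (hd _ _)).trans (by simp)

/-- symmetry of the matrix coefficients -/
lemma R_symm (c s : S) (n j k : ℕ) :
    (n.choose j : S) * ((C c + C s * X) ^ (n - j) * (C (-s) + C c * X) ^ j).coeff k =
    (n.choose k : S) * ((C c + C (-s) * X) ^ (n - k) * (C s + C c * X) ^ k).coeff j := by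
  set Q : S[X][X] := (C (C c + C s * X) + C (C (-s) + C c * X) * X) ^ n with hQ
  have h1 : (Q.coeff j).coeff k =
      (n.choose j : S) * ((C c + C s * X) ^ (n - j) * (C (-s) + C c * X) ^ j).coeff k := by
    rw [hQ, add_comm, add_pow, finsetSum_coeff]
    have : ∀ i ∈ Finset.range (n+1), ((C (C (-s) + C c * X) * X) ^ i * C (C c + C s * X) ^ (n - i) *
        ((n.choose i : ℕ) : S[X][X])).coeff j = if i = j then (n.choose j : S[X]) *
         ((C c + C s * X) ^ (n - j) * (C (-s) + C c * X) ^ j) else 0 := by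
      intro i _
      rw [show (C (C (-s) + C c * X) * X) ^ i * C (C c + C s * X) ^ (n - i) *
        ((n.choose i : ℕ) : S[X][X]) = C ((C (-s) + C c * X) ^ i * (C c + C s * X) ^ (n - i) *
         ((n.choose i : ℕ) : S[X])) * X ^ i by
          rw [mul_pow, C_mul, C_mul, C_pow, C_pow, map_natCast]; ring]
      rw [coeff_C_mul, coeff_X_pow]
      split_ifs with h1 h2 h2
      · subst h1; ring
      · exact absurd h1.symm h2
      · exact absurd h2.symm h1
      · simp
    rw [Finset.sum_congr rfl this, Finset.sum_ite_eq' ]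
    split_ifs with h
    · rw [← C_eq_natCast, coeff_C_mul]
    · rw [Finset.mem_range] at h
      rw [Nat.choose_eq_zero_of_lt (by omega)]; simp
  have h2 : (Q.coeff j).coeff k =
      (n.choose k : S) * ((C c + C (-s) * X) ^ (n - k) * (C s + C c * X) ^ k).coeff j := by
    have e : Q = (C X * (mapRingHom (C : S →+* S[X]) (C s + C c * X)) +
        mapRingHom (C : S →+* S[X]) (C c + C (-s) * X)) ^ n := by
      rw [hQ]; congr 1
      simp only [coe_mapRingHom, Polynomial.map_add, Polynomial.map_mul, map_C, map_X, C_add, C_mul]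
      ring
    rw [e, add_pow, finsetSum_coeff, finsetSum_coeff]
    have : ∀ i ∈ Finset.range (n+1), (((C X * (mapRingHom (C : S →+* S[X]) (C s + C c * X))) ^ i *
        (mapRingHom (C : S →+* S[X]) (C c + C (-s) * X)) ^ (n - i) *
        ((n.choose i : ℕ) : S[X][X])).coeff j).coeff k = if i = k then (n.choose k : S) *
         ((C c + C (-s) * X) ^ (n - k) * (C s + C c * X) ^ k).coeff j else 0 := by
      intro i _
      rw [show (C X * (mapRingHom (C : S →+* S[X]) (C s + C c * X))) ^ i *
        (mapRingHom (C : S →+* S[X]) (C c + C (-s) * X)) ^ (n - i) *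
        ((n.choose i : ℕ) : S[X][X]) = C (X ^ i) * (mapRingHom (C : S →+* S[X])
          (C ((n.choose i : ℕ) : S) * ((C c + C (-s) * X) ^ (n - i) * (C s + C c * X) ^ i))) by
          simp only [map_mul, map_pow, mul_pow, map_natCast]
          ring]
      rw [coeff_C_mul, coe_mapRingHom, coeff_map, coeff_C_mul, mul_comm, coeff_C_mul, coeff_X_pow]
      split_ifs with h1 h2 h2
      · subst h1; ring
      · exact absurd h1.symm h2
      · exact absurd h2.symm h1
      · simp
    rw [Finset.sum_congr rfl this, Finset.sum_ite_eq' ]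
    split_ifs with h
    · rfl
    · rw [Finset.mem_range] at h
      rw [Nat.choose_eq_zero_of_lt (by omega)]; simp
  rw [← h1, h2]

end trace

lemma homR {T : Type*} [CommRing T] (ψ : ℝ →+* T) (a b c d : ℝ) (i j : ℕ) (U V : T) :
    (ψ a * U + ψ b * V) ^ i * (ψ c * U + ψ d * V) ^ j = ∑ k ∈ Finset.range (i + j + 1),
      ψ (((C a + C b * X) ^ i * (C c + C d * X) ^ j).coeff k) * U ^ (i + j - k) * V ^ k := by
  rw [← hom_pow, hom]
  refine Finset.sum_congr rfl fun k _ => ?_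
  rw [← coeff_map]
  simp

lemma trS_pos (c s : ℝ) (n m : ℕ) :
    0 ≤ (trS (C (C (c ^ 2) * X + C (s ^ 2) * X ^ 2 : ℝ[X]) + C (C (c * s) * X - C (c * s)) * X)
      (C (C (c * s) * X ^ 2 - C (c * s) * X : ℝ[X]) + C (C (c ^ 2) * X + C (s ^ 2)) * X) n).coeff m := by
  set ψ : ℝ →+* ℝ[X][X] := (C : ℝ[X] →+* ℝ[X][X]).comp C with hψ
  set U : ℝ[X][X] := ψ c * C X + ψ (-s) * X with hU
  set V0 : ℝ[X][X] := ψ s * C X + ψ c * X with hV0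
  have hA : (C (C (c ^ 2) * X + C (s ^ 2) * X ^ 2 : ℝ[X]) + C (C (c * s) * X - C (c * s)) * X) =
      ψ c * U + ψ s * (C X * V0) := by
    simp only [hU, hV0, hψ, RingHom.comp_apply, C_add, C_mul, C_pow, C_sub, C_neg, map_neg]
    ring
  have hB : (C (C (c * s) * X ^ 2 - C (c * s) * X : ℝ[X]) + C (C (c ^ 2) * X + C (s ^ 2)) * X) =
      ψ (-s) * U + ψ c * (C X * V0) := by
    simp only [hU, hV0, hψ, RingHom.comp_apply, C_add, C_mul, C_pow, C_sub, C_neg, map_neg]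
    ring
  rw [hA, hB, trS, finsetSum_coeff]
  refine Finset.sum_nonneg fun j hj => ?_
  have hj := Finset.mem_range.mp hj
  rw [homR, finsetSum_coeff, finsetSum_coeff]
  refine Finset.sum_nonneg fun k hk => ?_
  have hk := Finset.mem_range.mp hk
  rw [show n - j + j = n by omega] at hk ⊢
  set R := ((C c + C s * X) ^ (n - j) * (C (-s) + C c * X) ^ j).coeff k with hR
  set R' := ((C c + C (-s) * X) ^ (n - k) * (C s + C c * X) ^ k).coeff j with hR'
  have e1 : (U ^ (n - k) * V0 ^ k).coeff j = C R' * X ^ (n - j) := by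
    rw [hU, hV0, homR, show n - k + k = n by omega, finsetSum_coeff]
    rw [Finset.sum_eq_single j]
    · rw [hψ, RingHom.comp_apply, ← C_pow, ← C_mul, coeff_C_mul, coeff_X_pow, if_pos rfl, mul_one]
    · intro i _ hi
      rw [hψ, RingHom.comp_apply, ← C_pow, ← C_mul, coeff_C_mul, coeff_X_pow, if_neg hi.symm, mul_zero]
    · intro h; exact absurd (Finset.mem_range.mpr hj) h
  have e2 : (ψ R * U ^ (n - k) * (C X * V0) ^ k).coeff j = C (R * R') * X ^ (k + (n - j)) := by
    rw [show ψ R * U ^ (n - k) * (C X * V0) ^ k = C (C R * X ^ k) * (U ^ (n - k) * V0 ^ k) by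
      simp only [hψ, RingHom.comp_apply, C_mul, C_pow]; ring]
    rw [coeff_C_mul, e1, C_mul, pow_add]; ring
  rw [e2, coeff_C_mul, coeff_X_pow]
  have hsym := R_symm c s n j k
  rw [← hR, ← hR'] at hsym
  have hc1 : (0:ℝ) < n.choose j := by exact_mod_cast Nat.choose_pos (by omega)
  have hc2 : (0:ℝ) < n.choose k := by exact_mod_cast Nat.choose_pos (by omega)
  have : 0 ≤ R * R' := by
    have h : (n.choose k : ℝ) * (R * R') = n.choose j * R ^ 2 := by
      linear_combination -R * hsym
    have h3 : 0 ≤ (n.choose k : ℝ) * (R * R') := by rw [h]; positivity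
    exact nonneg_of_mul_nonneg_right h3 hc2
  split_ifs <;> simp [this]

lemma trS_coeff (c s : ℝ) (hcs : c ^ 2 + s ^ 2 = 1) (n : ℕ) : ∀ m : ℕ,
    (trS (C (C (c ^ 2) * X + C (s ^ 2) * X ^ 2 : ℝ[X]) + C (C (c * s) * X - C (c * s)) * X)
      (C (C (c * s) * X ^ 2 - C (c * s) * X : ℝ[X]) + C (C (c ^ 2) * X + C (s ^ 2)) * X) n).coeff m
      = (sig n (m - n)).eval (s ^ 2) := by
  have hc : c ^ 2 = 1 - s ^ 2 := by linarith
  induction n using Nat.twoStepInduction with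
  | zero =>
    intro m
    simp [trS, sig, coeff_one]
    split_ifs <;> simp
  | one =>
    intro m
    have : trS (C (C (c ^ 2) * X + C (s ^ 2) * X ^ 2 : ℝ[X]) + C (C (c * s) * X - C (c * s)) * X)
      (C (C (c * s) * X ^ 2 - C (c * s) * X : ℝ[X]) + C (C (c ^ 2) * X + C (s ^ 2)) * X) 1 =
      C (s ^ 2) * 1 + C (2 * c ^ 2) * X ^ 1 + C (s ^ 2) * X ^ 2 := by
      rw [trS, Finset.sum_range_succ, Finset.sum_range_one]
      simp only [Nat.sub_zero, pow_one, pow_zero, mul_one, Nat.sub_self, one_mul, coeff_add,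
        coeff_C_zero, coeff_C_mul, coeff_X_zero, coeff_X_one, coeff_C_succ, mul_zero, add_zero,
        zero_add, C_mul, C_pow, map_ofNat, coeff_C]
      simp
      ring
    rw [this]
    simp only [coeff_add, coeff_C_mul, coeff_X_pow, coeff_one, sig, eval_add, eval_mul, eval_sub,
      eval_X, eval_one, eval_ofNat, hc]
    rcases m with _ | _ | _ | m
    · simp
    · simp
    · simp
    · push_cast
      simp only [if_neg (by omega : ¬ (m:ℤ) + 1 + 1 + 1 - 1 = 0),
        if_neg (by omega : ¬ (m:ℤ) + 1 + 1 + 1 - 1 + 1 = 0),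
        if_neg (by omega : ¬ (m:ℤ) + 1 + 1 + 1 - 1 - 1 = 0)]
      simp
  | more n h1 h2 =>
    intro m
    rw [trS_rec]
    set T1 := trS (C (C (c ^ 2) * X + C (s ^ 2) * X ^ 2 : ℝ[X]) + C (C (c * s) * X - C (c * s)) * X)
      (C (C (c * s) * X ^ 2 - C (c * s) * X : ℝ[X]) + C (C (c ^ 2) * X + C (s ^ 2)) * X) (n+1)
    set T0 := trS (C (C (c ^ 2) * X + C (s ^ 2) * X ^ 2 : ℝ[X]) + C (C (c * s) * X - C (c * s)) * X)
      (C (C (c * s) * X ^ 2 - C (c * s) * X : ℝ[X]) + C (C (c ^ 2) * X + C (s ^ 2)) * X) n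
    have hcs' : (C c ^ 2 + C s ^ 2 : ℝ[X]) = 1 := by
      rw [← C_pow, ← C_pow, ← C_add, hcs, C_1]
    have e : (C (c ^ 2) * X + C (s ^ 2) * X ^ 2 + (C (c ^ 2) * X + C (s ^ 2))) * T1 -
        ((C (c ^ 2) * X + C (s ^ 2) * X ^ 2) * (C (c ^ 2) * X + C (s ^ 2)) -
          (C (c * s) * X - C (c * s)) * (C (c * s) * X ^ 2 - C (c * s) * X)) * T0 =
        C (s ^ 2) * T1 + C (2 * c ^ 2) * (X ^ 1 * T1) + C (s ^ 2) * (X ^ 2 * T1) - X ^ 2 * T0 := by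
      simp only [C_mul, C_pow, map_ofNat]
      linear_combination (-T0 * X ^ 2 * (C c ^ 2 + C s ^ 2 + 1)) * hcs'
    rw [e]
    simp only [coeff_sub, coeff_add, coeff_C_mul, coeff_X_pow_mul', h1, h2, sig, eval_add,
      eval_sub, eval_mul, eval_X, eval_one, eval_ofNat, hc]
    push_cast
    have z : ∀ k : ℤ, k < -(n:ℤ) - 1 → eval (s^2) (sig (n+1) k) = 0 := by
      intro k hk; rw [sig_supp, eval_zero]; rw [lt_abs]; push_cast; omega
    have z0 : ∀ k : ℤ, k < -(n:ℤ) → eval (s^2) (sig n k) = 0 := by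
      intro k hk; rw [sig_supp, eval_zero]; rw [lt_abs]; omega
    rw [show (m:ℤ) - (n + 2) + 1 = m - (n+1) by ring]
    rcases m with _ | _ | m
    · simp only [CharP.cast_eq_zero]
      rw [z (0 - ((n:ℤ) + 2)) (by omega), z (0 - ((n:ℤ) + 2) - 1) (by omega),
        z0 (0 - ((n:ℤ) + 2)) (by omega)]
      simp
    · simp only [zero_add, Nat.cast_one]
      rw [z (1 - ((n:ℤ) + 2) - 1) (by omega), z0 (1 - ((n:ℤ) + 2)) (by omega)]
      rw [show (1 - ((n:ℤ) + 2)) = -1 + -n by ring]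
      simp
      ring
    · rw [if_pos (by omega), if_pos (by omega), if_pos (by omega),
        Nat.cast_sub (by omega), Nat.cast_sub (by omega)]
      push_cast
      rw [show (m:ℤ) + 1 + 1 - 1 - (n + 1) = m + 1 + 1 - (n + 2) by ring,
        show (m:ℤ) + 1 + 1 - 2 - (n + 1) = m + 1 + 1 - (n + 2) - 1 by ring,
        show (m:ℤ) + 1 + 1 - 2 - n = m + 1 + 1 - (n + 2) by ring]
      ring

lemma sig_nonneg (n : ℕ) (k : ℕ) {y : ℝ} (h0 : 0 ≤ y) (h1 : y ≤ 1) : 0 ≤ (sig n k).eval y := by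
  have hs : (√y) ^ 2 = y := Real.sq_sqrt h0
  have hc : (√(1-y)) ^ 2 = 1 - y := Real.sq_sqrt (by linarith)
  have := trS_pos (√(1-y)) (√y) n (n + k)
  rw [trS_coeff _ _ (by rw [hs, hc]; ring) n (n + k)] at this
  push_cast at this
  rwa [add_sub_cancel_left, hs] at this

end BR

namespace BR
open Filter Topology

/-! ### First order expansions in `1 - m` -/

def J (f : ℝ → ℝ) (a b : ℝ) : Prop :=
  ∃ K : ℝ, 0 ≤ K ∧ ∀ m ∈ Icc (1/2 : ℝ) 1, |f m - (a + (1 - m) * b)| ≤ K * (1 - m) ^ 2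

lemma J.congr {f g : ℝ → ℝ} {a b : ℝ} (h : J f a b) (e : ∀ m ∈ Icc (1/2 : ℝ) 1, g m = f m) :
    J g a b := by
  obtain ⟨K, h0, hK⟩ := h
  exact ⟨K, h0, fun m hm => by rw [e m hm]; exact hK m hm⟩

lemma J_const (c : ℝ) : J (fun _ => c) c 0 := ⟨0, le_rfl, fun m _ => by simp⟩

lemma J_id : J (fun m => m) 1 (-1) := ⟨0, le_rfl, fun m _ => by
  rw [show m - (1 + (1 - m) * -1) = 0 by ring]; simp⟩

lemma J_inv : J (fun m => m⁻¹) 1 1 := ⟨2, by norm_num, fun m hm => by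
  have hm0 : 0 < m := by linarith [hm.1]
  rw [show m⁻¹ - (1 + (1 - m) * 1) = m⁻¹ * (1 - m) ^ 2 by field_simp; ring,
    abs_of_nonneg (by positivity)]
  gcongr
  rw [inv_le_comm₀ hm0 (by norm_num)]
  linarith [hm.1]⟩

lemma J.add {f g : ℝ → ℝ} {a b a' b' : ℝ} (h : J f a b) (h' : J g a' b') :
    J (fun m => f m + g m) (a + a') (b + b') := by
  obtain ⟨K, h0, hK⟩ := h
  obtain ⟨K', h0', hK'⟩ := h'
  refine ⟨K + K', by positivity, fun m hm => ?_⟩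
  have h1 := hK m hm
  have h2 := hK' m hm
  rw [show f m + g m - (a + a' + (1 - m) * (b + b')) =
    (f m - (a + (1 - m) * b)) + (g m - (a' + (1 - m) * b')) by ring]
  refine (abs_add_le _ _).trans ?_
  linarith

lemma J.mul {f g : ℝ → ℝ} {a b a' b' : ℝ} (h : J f a b) (h' : J g a' b') :
    J (fun m => f m * g m) (a * a') (a * b' + b * a') := by
  obtain ⟨K, h0, hK⟩ := h
  obtain ⟨K', h0', hK'⟩ := h'
  refine ⟨K * (|a'| + |b'| + K') + (|a| + |b|) * K' + |b * b'|, by positivity, fun m hm => ?_⟩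
  have h1 := hK m hm
  have h2 := hK' m hm
  set e := 1 - m with he
  have he0 : 0 ≤ e := by linarith [hm.2]
  have he1 : e ≤ 1 := by linarith [hm.1]
  have he2 : e ^ 2 ≤ 1 := by nlinarith
  set x := f m - (a + e * b)
  set y := g m - (a' + e * b')
  rw [show f m * g m - (a * a' + e * (a * b' + b * a')) =
    x * (a' + e * b' + y) + (a + e * b) * y + (b * b') * e ^ 2 by simp only [x, y]; ring]
  have ha : |a' + e * b' + y| ≤ |a'| + |b'| + K' := by
    refine (abs_add_le _ _).trans (add_le_add ((abs_add_le _ _).trans (add_le_add le_rfl ?_)) ?_)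
    · rw [abs_mul, abs_of_nonneg he0]; nlinarith [abs_nonneg b']
    · refine h2.trans ?_; nlinarith
  have hb : |a + e * b| ≤ |a| + |b| := by
    refine (abs_add_le _ _).trans (add_le_add le_rfl ?_)
    rw [abs_mul, abs_of_nonneg he0]; nlinarith [abs_nonneg b]
  have s1 := abs_add_le (x * (a' + e * b' + y) + (a + e * b) * y) (b * b' * e ^ 2)
  have s2 := abs_add_le (x * (a' + e * b' + y)) ((a + e * b) * y)
  rw [abs_mul (b * b'), abs_of_nonneg (sq_nonneg e)] at s1
  rw [abs_mul x, abs_mul (a + e * b)] at s2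
  have t1 : |x| * |a' + e * b' + y| ≤ (K * e ^ 2) * (|a'| + |b'| + K') := by gcongr
  have t2 : |a + e * b| * |y| ≤ (|a| + |b|) * (K' * e ^ 2) := by gcongr
  linarith

lemma J.pow {f : ℝ → ℝ} {b : ℝ} (h : J f 1 b) (k : ℕ) : J (fun m => f m ^ k) 1 (k * b) := by
  induction k with
  | zero => simpa using J_const 1
  | succ k ih =>
    have := ih.mul h
    simp only [← pow_succ] at this
    convert this using 1 <;> push_cast <;> ring

lemma J_sum {ι : Type*} (s : Finset ι) (f : ι → ℝ → ℝ) (a b : ι → ℝ)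
    (h : ∀ i ∈ s, J (f i) (a i) (b i)) :
    J (fun m => ∑ i ∈ s, f i m) (∑ i ∈ s, a i) (∑ i ∈ s, b i) := by
  classical
  induction s using Finset.induction_on with
  | empty => simpa using J_const 0
  | insert x s hx ih =>
    simp only [Finset.sum_insert hx]
    exact (h x (by simp)).add (ih fun i hi => h i (by simp [hi]))

def JS (F : ℝ → PowerSeries ℝ) (A B : PowerSeries ℝ) : Prop :=
  ∀ l, J (fun m => PowerSeries.coeff l (F m)) (PowerSeries.coeff l A) (PowerSeries.coeff l B)

lemma JS.mul {F G : ℝ → PowerSeries ℝ} {A B A' B' : PowerSeries ℝ} (h : JS F A B)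
    (h' : JS G A' B') : JS (fun m => F m * G m) (A * A') (A * B' + B * A') := by
  intro l
  simp only [PowerSeries.coeff_mul, map_add, ← Finset.sum_add_distrib]
  exact J_sum _ (fun (p : ℕ × ℕ) m => PowerSeries.coeff p.1 (F m) * PowerSeries.coeff p.2 (G m))
    _ _ (fun p _ => (h p.1).mul (h' p.2))

lemma JS.pow {F : ℝ → PowerSeries ℝ} {B : PowerSeries ℝ} (h : JS F 1 B) (i : ℕ) :
    JS (fun m => F m ^ i) 1 (i * B) := by
  induction i with
  | zero =>
    intro l
    simpa using J_const _
  | succ i ih =>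
    have := ih.mul h
    simp only [← pow_succ] at this
    convert this using 1 <;> push_cast <;> ring

/-- real Taylor coefficients of `(m - z)/(1 - m z)`. -/
def Q (m : ℝ) : PowerSeries ℝ :=
  PowerSeries.mk fun l => if l = 0 then m else m ^ (l-1) * (m ^ 2 - 1)

def B1 : PowerSeries ℝ := PowerSeries.mk fun l => if l = 0 then -1 else -2

lemma JS_Q : JS Q 1 B1 := by
  intro l
  simp only [Q, B1, PowerSeries.coeff_mk, PowerSeries.coeff_one]
  split_ifs with h
  · exact J_id
  · have := (J_id.pow (l-1)).mul ((J_id.pow 2).add (J_const (-1)))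
    refine (this.congr (g := fun m => m ^ (l-1) * (m^2-1)) (fun m _ => by ring)).congr
      (fun m _ => rfl) |> fun h => ?_
    convert h using 1 <;> norm_num

/-- the real matrix -/
def aa (k i : ℕ) (m : ℝ) : ℝ :=
  if i = 0 then (if k = 0 then 1 else m ^ k - (m⁻¹) ^ k) else
    (k / i : ℝ) * PowerSeries.coeff (k - i) (Q m ^ i)

lemma J_aa {k i : ℕ} (hik : i ≤ k) :
    J (aa k i) (if i = k then 1 else 0) (-k * (if i = k then 1 else 2)) := by
  by_cases hi : i = 0
  · subst hi
    by_cases hk : k = 0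
    · subst hk
      have := (J_const 1).congr (g := aa 0 0) (fun m _ => by simp [aa])
      simpa using this
    · have := (J_id.pow k).add ((J_const (-1)).mul (J_inv.pow k))
      rw [if_neg (Ne.symm hk), if_neg (Ne.symm hk)]
      refine (this.congr (g := aa k 0) (fun m _ => by simp [aa, hk]; ring)) |> fun h => ?_
      convert h using 1 <;> ring
  · have h1 := (J_const (k / i : ℝ)).mul (JS_Q.pow i (k - i))
    have h2 : J (aa k i) _ _ := h1.congr (fun m _ => by simp only [aa, if_neg hi])
    have e : ((i : ℕ) : PowerSeries ℝ) = PowerSeries.C (i : ℝ) := by simp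
    rw [e, PowerSeries.coeff_C_mul, PowerSeries.coeff_one, B1, PowerSeries.coeff_mk] at h2
    have hi' : (i : ℝ) ≠ 0 := by exact_mod_cast hi
    by_cases hk : i = k
    · subst hk
      simp only [Nat.sub_self, if_true] at h2 ⊢
      convert h2 using 1 <;> field_simp <;> ring
    · rw [if_neg (by omega : ¬ k - i = 0), if_neg (by omega : ¬ k - i = 0)] at h2
      rw [if_neg hk, if_neg hk]
      convert h2 using 1 <;> field_simp <;> ring

lemma aa_bound (n : ℕ) : ∃ K : ℝ, 0 ≤ K ∧ ∀ k ≤ n, ∀ i ≤ k, ∀ m ∈ Icc (1/2:ℝ) 1,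
    |aa k i m - ((if i = k then 1 else 0) + (1 - m) * (-k * (if i = k then 1 else 2)))|
      ≤ K * (1 - m) ^ 2 := by
  have : ∀ k i : ℕ, ∃ K : ℝ, 0 ≤ K ∧ (i ≤ k → ∀ m ∈ Icc (1/2:ℝ) 1,
    |aa k i m - ((if i = k then 1 else 0) + (1 - m) * (-k * (if i = k then 1 else 2)))|
      ≤ K * (1 - m) ^ 2) := by
    intro k i
    by_cases h : i ≤ k
    · obtain ⟨K, h0, hK⟩ := J_aa h
      exact ⟨K, h0, fun _ => hK⟩
    · exact ⟨0, le_rfl, fun h' => absurd h' h⟩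
  choose K h0 hK using this
  refine ⟨∑ k ∈ Finset.range (n+1), ∑ i ∈ Finset.range (n+1), K k i,
    Finset.sum_nonneg fun k _ => Finset.sum_nonneg fun i _ => h0 k i, ?_⟩
  intro k hk i hi m hm
  refine (hK k i hi m hm).trans ?_
  gcongr
  calc K k i ≤ ∑ i ∈ Finset.range (n+1), K k i :=
        Finset.single_le_sum (f := fun i => K k i) (fun i _ => h0 k i) (Finset.mem_range.mpr (by omega))
    _ ≤ _ := Finset.single_le_sum (f := fun k => ∑ i ∈ Finset.range (n+1), K k i)
        (fun k _ => Finset.sum_nonneg fun i _ => h0 k i) (Finset.mem_range.mpr (by omega))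

/-! ### The elementary slit-type maps -/

def qf (κ : ℂ) (m : ℝ) (z : ℂ) : ℂ := (m - κ * z) * (1 - (m * κ) * z)⁻¹

/-- the elementary map `z (m - κ z)/(1 - m κ z)`. -/
def pf (κ : ℂ) (m : ℝ) (z : ℂ) : ℂ := z * qf κ m z

/-- `1 + z u'/u`. -/
def Wf (u : ℂ → ℂ) (z : ℂ) : ℂ := 1 + z * (deriv u z / u z)

def stp (κ : ℂ) (m : ℝ) (u : ℂ → ℂ) (z : ℂ) : ℂ := qf κ m z * u (pf κ m z)

lemma geo_an (c : ℂ) : AnalyticAt ℂ (fun z => (1 - c * z)⁻¹) 0 := by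
  apply AnalyticAt.fun_inv (by fun_prop)
  simp

lemma geo_co (c : ℂ) (k : ℕ) : co k (fun z => (1 - c * z)⁻¹) = c ^ k := by
  induction k with
  | zero => simp [co_zero]
  | succ k ih =>
    have e : (fun z : ℂ => (1 - c * z)⁻¹) =ᶠ[𝓝 0] fun z => 1 + z * (c * (1 - c * z)⁻¹) := by
      have : ∀ᶠ z : ℂ in 𝓝 0, 1 - c * z ≠ 0 := by
        apply ContinuousAt.eventually_ne (by fun_prop)
        simp
      filter_upwards [this] with z hz
      field_simp
      ring
    have h := analyticAt_const.fun_mul (geo_an c) (f := fun _ => c)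
    rw [co_congr e, ← coeff_ser, ser_add analyticAt_const (an_id.fun_mul h), ser_mul an_id h, ser_id,
      ser_const, ser_const_mul c (geo_an c), map_add, PowerSeries.coeff_succ_X_mul,
      PowerSeries.coeff_C_mul, coeff_ser, ih, PowerSeries.coeff_C]
    simp [pow_succ, mul_comm]

lemma qf_an (κ : ℂ) (m : ℝ) : AnalyticAt ℂ (qf κ m) 0 :=
  AnalyticAt.fun_mul (by fun_prop) (geo_an _)

lemma qf_zero (κ : ℂ) (m : ℝ) : qf κ m 0 = m := by simp [qf]

lemma pf_an (κ : ℂ) (m : ℝ) : AnalyticAt ℂ (pf κ m) 0 := an_id.fun_mul (qf_an κ m)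

lemma pf_zero (κ : ℂ) (m : ℝ) : pf κ m 0 = 0 := by simp [pf]

lemma ser_qf (κ : ℂ) (m : ℝ) :
    ser (qf κ m) = PowerSeries.rescale κ (PowerSeries.map Complex.ofRealHom (Q m)) := by
  have e : qf κ m = fun z => (m:ℂ) * (1 - (m * κ) * z)⁻¹ + z * ((-κ) * (1 - (m * κ) * z)⁻¹) := by
    funext z; simp only [qf]; ring
  have h := geo_an (m * κ)
  have h2 := analyticAt_const.fun_mul h (f := fun _ => -κ)
  ext l
  rw [e, ser_add (analyticAt_const.fun_mul h) (an_id.fun_mul h2), ser_mul an_id h2, ser_id,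
    ser_const_mul _ h, ser_const_mul _ h, map_add, PowerSeries.coeff_rescale, PowerSeries.coeff_map, Q,
    PowerSeries.coeff_mk, PowerSeries.coeff_C_mul, coeff_ser, geo_co]
  rcases l with _ | l
  · simp
  · rw [PowerSeries.coeff_succ_X_mul, PowerSeries.coeff_C_mul, coeff_ser, geo_co]
    simp
    ring

lemma co_Wq (κ : ℂ) {m : ℝ} (hm : m ≠ 0) (k : ℕ) : co k (Wf (qf κ m)) = κ ^ k * aa k 0 m := by
  have e : Wf (qf κ m) =ᶠ[𝓝 0] fun z => 1 + ((1 - (m * κ) * z)⁻¹ + (-1) * (1 - (κ / m) * z)⁻¹) := by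
    have h1 : ∀ᶠ z : ℂ in 𝓝 0, 1 - (m * κ) * z ≠ 0 := by
      apply ContinuousAt.eventually_ne (by fun_prop)
      simp
    have h2 : ∀ᶠ z : ℂ in 𝓝 0, m - κ * z ≠ 0 := by
      apply ContinuousAt.eventually_ne (by fun_prop)
      simpa using hm
    filter_upwards [h1, h2] with z hz hz2
    have hm' : (m:ℂ) ≠ 0 := by exact_mod_cast hm
    have hd : HasDerivAt (qf κ m) ((-(κ * 1)) * (1 - (m * κ) * z)⁻¹ +
        (m - κ * z) * (-(-(m * κ * 1)) / (1 - (m * κ) * z) ^ 2)) z := by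
      refine HasDerivAt.mul (((hasDerivAt_id z).const_mul κ).const_sub (m:ℂ)) ?_
      exact HasDerivAt.inv (((hasDerivAt_id z).const_mul (m * κ)).const_sub 1) hz
    have h3 : 1 - (κ / m) * z ≠ 0 := by
      intro h
      apply hz2
      field_simp at h
      linear_combination h
    rw [Wf, hd.deriv, qf]
    have h4 : (1 - (κ / m) * z)⁻¹ = m / (m - κ * z) := by
      rw [inv_eq_one_div, div_eq_div_iff h3 hz2]
      field_simp
    rw [h4]
    generalize hb : 1 - (m * κ) * z = b at *
    generalize ha : m - κ * z = a at *
    field_simp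
    rw [← ha, ← hb]
    ring
  rw [co_congr e, ← coeff_ser, ser_add analyticAt_const, ser_add (geo_an _), ser_const_mul _ (geo_an _),
    ser_const, map_add, map_add, PowerSeries.coeff_C_mul, coeff_ser, coeff_ser, geo_co, geo_co,
    PowerSeries.coeff_C]
  · by_cases hk : k = 0
    · subst hk; simp [aa]
    · simp only [aa, if_neg hk, if_true]
      push_cast
      rw [div_eq_mul_inv, mul_pow, mul_pow]
      ring
  · exact analyticAt_const.fun_mul (geo_an _)
  · exact (geo_an _).fun_add (analyticAt_const.fun_mul (geo_an _))

lemma Wf_an {u : ℂ → ℂ} (hu : AnalyticAt ℂ u 0) (h0 : u 0 ≠ 0) : AnalyticAt ℂ (Wf u) 0 :=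
  analyticAt_const.fun_add (an_id.fun_mul (hu.deriv.fun_div hu h0))

lemma co_A (κ : ℂ) {m : ℝ} (hm : m ≠ 0) {k i : ℕ} :
    co k (fun z => Wf (qf κ m) z * pf κ m z ^ i) = if i ≤ k then κ ^ (k - i) * aa k i m else 0 := by
  by_cases hi : i = 0
  · subst hi
    simpa using co_Wq κ hm k
  · have hq := qf_an κ m
    have hp := pf_an κ m
    have hp' : AnalyticAt ℂ (fun z => pf κ m z ^ i) 0 := hp.fun_pow i
    have hm' : (m:ℂ) ≠ 0 := by exact_mod_cast hm
    have hi' : (i:ℂ) ≠ 0 := by exact_mod_cast hi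
    have e : (fun z => Wf (qf κ m) z * pf κ m z ^ i) =ᶠ[𝓝 0]
        fun z => (i:ℂ)⁻¹ * (z * deriv (fun z => pf κ m z ^ i) z) := by
      have h1 : ∀ᶠ z in 𝓝 0, AnalyticAt ℂ (qf κ m) z := hq.eventually_analyticAt
      have h2 : ∀ᶠ z in 𝓝 0, qf κ m z ≠ 0 := hq.continuousAt.eventually_ne (by simpa [qf_zero] using hm)
      filter_upwards [h1, h2] with z hz hz2
      have hd : HasDerivAt (pf κ m) (1 * qf κ m z + z * deriv (qf κ m) z) z :=
        (hasDerivAt_id z).mul hz.differentiableAt.hasDerivAt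
      have hd2 := (hd.fun_pow i).deriv
      rw [hd2, Wf]
      obtain ⟨j, rfl⟩ := Nat.exists_eq_succ_of_ne_zero hi
      simp only [Nat.succ_eq_add_one, Nat.add_sub_cancel] at *
      rw [pow_succ]
      nth_rw 2 [pf]
      field_simp
    rw [co_congr e, ← coeff_ser, ser_const_mul _ (an_id.fun_mul hp'.deriv), PowerSeries.coeff_C_mul,
      coeff_ser, co_z_deriv k hp']
    have e2 : (fun z => pf κ m z ^ i) = fun z => z ^ i * qf κ m z ^ i := by
      funext z; simp only [pf, mul_pow]
    rw [e2, ← coeff_ser, ser_z_pow_mul i (hq.fun_pow i), ser_pow hq, PowerSeries.coeff_X_pow_mul', ser_qf,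
      ← map_pow, ← map_pow, PowerSeries.coeff_rescale, PowerSeries.coeff_map]
    split_ifs with h
    · simp only [aa, if_neg hi]
      push_cast
      simp only [Complex.ofRealHom_eq_coe]
      ring
    · simp

lemma stp_an {κ : ℂ} {m : ℝ} {u : ℂ → ℂ} (hu : AnalyticAt ℂ u 0) : AnalyticAt ℂ (stp κ m u) 0 := by
  refine (qf_an κ m).fun_mul (AnalyticAt.fun_comp ?_ (pf_an κ m))
  rwa [pf_zero]

lemma stp_zero {κ : ℂ} {m : ℝ} {u : ℂ → ℂ} : stp κ m u 0 = m * u 0 := by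
  simp [stp, qf_zero, pf_zero]

/-- The transformation law of the logarithmic coefficients -/
lemma co_stp (κ : ℂ) {m : ℝ} (hm : m ≠ 0) {u : ℂ → ℂ} (hu : AnalyticAt ℂ u 0) (h0 : u 0 ≠ 0)
    (k : ℕ) : co k (Wf (stp κ m u)) =
      ∑ i ∈ Finset.range (k+1), co i (Wf u) * (κ ^ (k - i) * aa k i m) := by
  have hq := qf_an κ m
  have hm' : (m:ℂ) ≠ 0 := by exact_mod_cast hm
  have e : Wf (stp κ m u) =ᶠ[𝓝 0] fun z => Wf (qf κ m) z * Wf u (pf κ m z) := by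
    have h1 : ∀ᶠ z in 𝓝 0, AnalyticAt ℂ (qf κ m) z := hq.eventually_analyticAt
    have h2 : ∀ᶠ z in 𝓝 0, qf κ m z ≠ 0 := hq.continuousAt.eventually_ne (by simpa [qf_zero] using hm)
    have hpc : Tendsto (pf κ m) (𝓝 0) (𝓝 0) := by
      have := (pf_an κ m).continuousAt.tendsto
      rwa [pf_zero] at this
    have h3 : ∀ᶠ z in 𝓝 0, AnalyticAt ℂ u (pf κ m z) := hpc.eventually hu.eventually_analyticAt
    have h4 : ∀ᶠ z in 𝓝 0, u (pf κ m z) ≠ 0 := hpc.eventually (hu.continuousAt.eventually_ne h0)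
    filter_upwards [h1, h2, h3, h4] with z hz hz2 hz3 hz4
    have hd : HasDerivAt (pf κ m) (1 * qf κ m z + z * deriv (qf κ m) z) z :=
      (hasDerivAt_id z).mul hz.differentiableAt.hasDerivAt
    have hd2 : HasDerivAt (stp κ m u) _ z :=
      hz.differentiableAt.hasDerivAt.mul (hz3.differentiableAt.hasDerivAt.comp z hd)
    rw [Wf, hd2.deriv, stp, Wf, Wf]
    have : pf κ m z = z * qf κ m z := rfl
    set v := u (pf κ m z)
    set v' := deriv u (pf κ m z)
    rw [this]
    field_simp
    ring
  have hqW := Wf_an hq (by rw [qf_zero]; exact hm')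
  rw [co_congr e, co_mul_comp hqW (Wf_an hu h0) (pf_an κ m) (pf_zero κ m) (Nat.lt_succ_self k)]
  refine Finset.sum_congr rfl fun i hi => ?_
  rw [co_A κ hm, if_pos (by have := Finset.mem_range.mp hi; omega)]

end BR

namespace BR
open Filter Topology

def tau (n k : ℕ) : Polynomial ℝ := ∑ j ∈ Finset.Ico k (n+1), (sig n j + sig n (j+1))

lemma tau_succ {n k : ℕ} (hk : k ≤ n) : tau n k = (sig n k + sig n (k+1)) + tau n (k+1) := by
  rw [tau, Finset.sum_eq_sum_Ico_succ_bot (by omega)]; rfl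

lemma tau_top (n : ℕ) : tau n (n+1) = 0 := by simp [tau]

lemma sig_top (n : ℕ) : sig n ((n:ℤ)+1) = 0 := by
  apply sig_supp
  rw [abs_of_nonneg (by omega)]; omega

lemma tau_deriv {n k : ℕ} (hk : k ≤ n+1) :
    Polynomial.X * Polynomial.derivative (tau n k) = (k : Polynomial ℝ) * sig n k := by
  induction hk using Nat.decreasingInduction with
  | self => simp [tau_top]; right; exact sig_top n
  | of_succ k hk ih =>
    rw [tau_succ (by omega), Polynomial.derivative_add, mul_add, sig_deriv, ih]
    push_cast
    ring

lemma tau_one {n k : ℕ} (hk : k ≤ n+1) : (tau n k).eval 1 = (n:ℝ) + 1 - k := by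
  induction hk using Nat.decreasingInduction with
  | self => simp [tau_top]
  | of_succ k hk ih =>
    rw [tau_succ (by omega), Polynomial.eval_add, sig_one, ih, if_pos (by omega)]
    push_cast
    ring

lemma tau_nonneg (n k : ℕ) {y : ℝ} (h0 : 0 ≤ y) (h1 : y ≤ 1) : 0 ≤ (tau n k).eval y := by
  rw [tau, Polynomial.eval_finsetSum]
  refine Finset.sum_nonneg fun j _ => ?_
  rw [Polynomial.eval_add]
  have a := sig_nonneg n j h0 h1
  have b := sig_nonneg n (j+1) h0 h1
  push_cast at b
  linarith

lemma poly_taylor (p : Polynomial ℝ) : ∃ K : ℝ, 0 ≤ K ∧ ∀ m ∈ Icc (1/2:ℝ) 1, ∀ y, 0 ≤ y → y ≤ 1 →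
    |p.eval (y/m) - (p.eval y + (1-m) * (Polynomial.X * Polynomial.derivative p).eval y)|
      ≤ K * (1-m)^2 := by
  induction p using Polynomial.induction_on' with
  | add p q hp hq =>
    obtain ⟨K, h0, hK⟩ := hp
    obtain ⟨K', h0', hK'⟩ := hq
    refine ⟨K + K', by positivity, fun m hm y hy hy1 => ?_⟩
    have h1 := hK m hm y hy hy1
    have h2 := hK' m hm y hy hy1
    simp only [Polynomial.derivative_add, mul_add, Polynomial.eval_add] at *
    have := abs_add_le (p.eval (y/m) - (p.eval y + (1-m) * (Polynomial.X * Polynomial.derivative p).eval y)) (q.eval (y/m) - (q.eval y + (1-m) * (Polynomial.X * Polynomial.derivative q).eval y))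
    refine le_trans (le_of_eq ?_) (this.trans (by linarith))
    congr 1
    ring
  | monomial k c =>
    obtain ⟨K, h0, hK⟩ := J_inv.pow k
    refine ⟨|c| * K, by positivity, fun m hm y hy hy1 => ?_⟩
    have h1 := hK m hm
    have e : (Polynomial.X * Polynomial.derivative (Polynomial.monomial k c)).eval y = c * k * y ^ k := by
      rcases k with _ | k
      · simp
      · simp
    rw [e]
    simp only [Polynomial.eval_monomial]
    rw [show c * (y / m) ^ k - (c * y ^ k + (1 - m) * (c * k * y ^ k)) =
      c * y ^ k * (m⁻¹ ^ k - (1 + (1 - m) * (k * 1))) by rw [div_eq_mul_inv, mul_pow]; ring, abs_mul, abs_mul]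
    have h2 : |y ^ k| ≤ 1 := by
      rw [abs_of_nonneg (by positivity)]; exact pow_le_one₀ hy hy1
    calc |c| * |y ^ k| * _ ≤ |c| * 1 * (K * (1-m)^2) := by gcongr
      _ = _ := by ring

lemma poly_bdd (p : Polynomial ℝ) : ∃ M : ℝ, 0 ≤ M ∧ ∀ y, 0 ≤ y → y ≤ 1 → |p.eval y| ≤ M := by
  obtain ⟨M, hM⟩ := isCompact_Icc.exists_bound_of_continuousOn (s := Icc (0:ℝ) 1) p.continuous.continuousOn
  refine ⟨|M|, abs_nonneg _, fun y h0 h1 => ?_⟩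
  exact (hM y ⟨h0, h1⟩).trans (le_abs_self _)

lemma unif {ι : Type*} (s : Finset ι) (P : ι → ℝ → Prop) (hmono : ∀ i, ∀ a b, a ≤ b → P i a → P i b)
    (h : ∀ i, ∃ K : ℝ, 0 ≤ K ∧ P i K) : ∃ K : ℝ, 0 ≤ K ∧ ∀ i ∈ s, P i K := by
  choose K h0 hK using h
  refine ⟨∑ i ∈ s, K i, Finset.sum_nonneg fun i _ => h0 i, fun i hi => hmono i _ _ ?_ (hK i)⟩
  exact Finset.single_le_sum (f := K) (fun i _ => h0 i) hi

lemma tau_unif (n : ℕ) : ∃ K : ℝ, 0 ≤ K ∧ ∀ k ∈ Finset.range n, (∀ m ∈ Icc (1/2:ℝ) 1, ∀ y, 0 ≤ y → y ≤ 1 →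
    |(tau n (k+1)).eval (y/m) - ((tau n (k+1)).eval y + (1-m) * ((k+1) * (sig n (k+1)).eval y))|
      ≤ K * (1-m)^2) ∧ (∀ y, 0 ≤ y → y ≤ 1 → |(tau n (k+1)).eval y| ≤ K) ∧
      (∀ y, 0 ≤ y → y ≤ 1 → |(sig n (k+1)).eval y| ≤ K) := by
  have key : ∃ K : ℝ, 0 ≤ K ∧ ∀ k ∈ Finset.range n, (k + 1 ≤ n + 1 → ∀ m ∈ Icc (1/2:ℝ) 1, ∀ y, 0 ≤ y → y ≤ 1 →
    |(tau n (k+1)).eval (y/m) - ((tau n (k+1)).eval y + (1-m) * ((k+1) * (sig n (k+1)).eval y))|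
      ≤ K * (1-m)^2) ∧ (∀ y, 0 ≤ y → y ≤ 1 → |(tau n (k+1)).eval y| ≤ K) ∧
      (∀ y, 0 ≤ y → y ≤ 1 → |(sig n (k+1)).eval y| ≤ K) := by
    refine unif (Finset.range n) _ ?_ ?_
    · intro i a b hab h
      refine ⟨fun hi m hm y h0 h1 => (h.1 hi m hm y h0 h1).trans ?_, fun y h0 h1 => (h.2.1 y h0 h1).trans hab,
        fun y h0 h1 => (h.2.2 y h0 h1).trans hab⟩
      gcongr
    · intro k
      obtain ⟨K1, h1, hK1⟩ := poly_taylor (tau n (k+1))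
      obtain ⟨K2, h2, hK2⟩ := poly_bdd (tau n (k+1))
      obtain ⟨K3, h3, hK3⟩ := poly_bdd (sig n (k+1))
      refine ⟨K1 + K2 + K3, by positivity, ?_, ?_, ?_⟩
      · intro hk m hm y hy0 hy1
        have := hK1 m hm y hy0 hy1
        rw [tau_deriv hk] at this
        simp only [Polynomial.eval_mul, Polynomial.eval_natCast] at this
        push_cast at this
        refine this.trans ?_
        gcongr
        linarith
      · intro y hy0 hy1
        linarith [hK2 y hy0 hy1]
      · intro y hy0 hy1
        linarith [hK3 y hy0 hy1]
  obtain ⟨K, h0, hK⟩ := key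
  exact ⟨K, h0, fun k hk => ⟨(hK k hk).1 (by have := Finset.mem_range.mp hk; omega), (hK k hk).2⟩⟩

/-- the de Branges functional -/
def Om (n : ℕ) (y : ℝ) (D : ℕ → ℂ) : ℝ :=
  ∑ k ∈ Finset.range n, (tau n (k+1)).eval y * ((‖D (k+1)‖^2 - 4) / (k+1))

def TT (n : ℕ) (D : ℕ → ℂ) : ℝ := ∑ k ∈ Finset.range (n+1), ‖D k‖

def XX (E : ℕ → ℂ) (k : ℕ) : ℂ := E (k+1) + 2 * ∑ i ∈ Finset.range (k+1), E i

lemma le_TT {n k : ℕ} (D : ℕ → ℂ) (hk : k ≤ n) : ‖D k‖ ≤ TT n D :=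
  Finset.single_le_sum (f := fun k => ‖D k‖) (fun _ _ => norm_nonneg _) (Finset.mem_range.mpr (by omega))

lemma XX_le {n k : ℕ} (E : ℕ → ℂ) (hk : k < n) : ‖XX E k‖ ≤ 2 * TT n E := by
  have h1 : ‖XX E k‖ ≤ ‖E (k+1)‖ + 2 * ∑ i ∈ Finset.range (k+1), ‖E i‖ := by
    refine (norm_add_le _ _).trans ?_
    rw [norm_mul]
    have := norm_sum_le (Finset.range (k+1)) E
    norm_num
    linarith
  have h2 : ∑ i ∈ Finset.range (k+2), ‖E i‖ ≤ TT n E := by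
    apply Finset.sum_le_sum_of_subset_of_nonneg
    · intro i hi; simp at *; omega
    · intros; positivity
  rw [Finset.sum_range_succ] at h2
  have h3 : 0 ≤ ‖E (k+1)‖ := norm_nonneg _
  linarith

/-- the sign identity -/
lemma sign_id (n : ℕ) {y : ℝ} (h0 : 0 ≤ y) (h1 : y ≤ 1) (E : ℕ → ℂ) (hE : E 0 = 1) :
    ∑ k ∈ Finset.range n, ((sig n (k+1)).eval y * (‖E (k+1)‖^2 - 4)
      - (tau n (k+1)).eval y * (2 * (star (E (k+1)) * XX E k).re)) ≤ 0 := by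
  set b : ℕ → ℂ := fun k => ∑ i ∈ Finset.range k, E (i+1) with hb
  set g : ℕ → ℝ := fun k => 2 * ‖b k‖^2 + 4 * (b k).re with hg
  have hb1 : ∀ k, b (k+1) = b k + E (k+1) := fun k => Finset.sum_range_succ _ _
  have hX : ∀ k, XX E k = 2 + b (k+1) + b k := by
    intro k
    rw [XX, Finset.sum_range_succ', hE, hb1]
    simp only [hb]; ring
  have h2 : ∀ k, 2 * (star (E (k+1)) * XX E k).re = g (k+1) - g k := by
    intro k
    have : E (k+1) = b (k+1) - b k := by rw [hb1]; ring
    rw [hX, this]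
    simp only [hg, ← Complex.normSq_eq_norm_sq, Complex.normSq_apply]
    simp
    ring
  have h3 : ∀ k, ‖E (k+1)‖^2 - 4 = g (k+1) + g k - ‖b (k+1) + b k + 2‖^2 := by
    intro k
    have : E (k+1) = b (k+1) - b k := by rw [hb1]; ring
    rw [this]
    simp only [hg, ← Complex.normSq_eq_norm_sq, Complex.normSq_apply]
    simp
    ring
  have h4 : ∀ N ≤ n, ∑ k ∈ Finset.range N, ((sig n (k+1)).eval y * (g (k+1) + g k)
      - (tau n (k+1)).eval y * (g (k+1) - g k)) = - ((tau n (N+1)).eval y + (sig n (N+1)).eval y) * g N := by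
    intro N hN
    induction N with
    | zero => simp [hg, hb]
    | succ N ih =>
      rw [Finset.sum_range_succ, ih (by omega), tau_succ (k := N+1) (by omega)]
      simp only [Polynomial.eval_add]
      push_cast
      ring
  have h5 := h4 n le_rfl
  rw [tau_top, sig_top] at h5
  simp only [Polynomial.eval_zero, add_zero, neg_zero, zero_mul] at h5
  rw [← h5]
  refine Finset.sum_le_sum fun k _ => ?_
  rw [h2, h3]
  have := sig_nonneg n (k+1) h0 h1
  push_cast at this
  have h6 := mul_nonneg this (sq_nonneg ‖b (k+1) + b k + 2‖)
  linarith

lemma one_step (n : ℕ) : ∃ K : ℝ, 0 ≤ K ∧ ∀ m ∈ Icc (1/2:ℝ) 1, ∀ E E' : ℕ → ℂ, 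
    (∀ k ≤ n, E' k = ∑ i ∈ Finset.range (k+1), E i * aa k i m) →
    (∀ k < n, ‖E' (k+1) - (E (k+1) - ((1-m) * (k+1) : ℝ) * XX E k)‖ ≤ K * (1-m)^2 * TT n E) ∧
    ‖E' 0 - E 0‖ ≤ K * (1-m)^2 * TT n E := by
  obtain ⟨K, h0, hK⟩ := aa_bound n
  refine ⟨K, h0, fun m hm E E' h => ?_⟩
  have main : ∀ k ≤ n, ‖E' k - ∑ i ∈ Finset.range (k+1), E i * (((if i = k then 1 else 0) + (1 - m) * (-k * (if i = k then 1 else 2)) : ℝ):ℂ)‖ ≤ K * (1-m)^2 * TT n E := by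
    intro k hk
    rw [h k hk, ← Finset.sum_sub_distrib]
    refine (norm_sum_le _ _).trans ?_
    calc _ ≤ ∑ i ∈ Finset.range (k+1), K * (1-m)^2 * ‖E i‖ := by
          refine Finset.sum_le_sum fun i hi => ?_
          rw [← mul_sub, ← Complex.ofReal_sub, norm_mul, Complex.norm_real, mul_comm, Real.norm_eq_abs]
          gcongr
          exact hK k hk i (by have := Finset.mem_range.mp hi; omega) m hm
      _ ≤ _ := by
          rw [← Finset.mul_sum]
          gcongr
          apply Finset.sum_le_sum_of_subset_of_nonneg
          · intro i hi; simp at *; omega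
          · intros; positivity
  refine ⟨fun k hk => ?_, ?_⟩
  · have := main (k+1) (by omega)
    convert this using 3
    rw [Finset.sum_range_succ, if_pos rfl, if_pos rfl, XX]
    have : ∑ i ∈ Finset.range (k+1), E i * (((if i = k+1 then 1 else 0) + (1 - m) * (-(k+1:ℕ) * (if i = k+1 then 1 else 2)) : ℝ):ℂ) = ∑ i ∈ Finset.range (k+1), E i * (((1 - m) * (-(k+1:ℕ) * 2) : ℝ):ℂ) := by
      refine Finset.sum_congr rfl fun i hi => ?_
      have := Finset.mem_range.mp hi
      rw [if_neg (by omega), if_neg (by omega), zero_add]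
    rw [this, ← Finset.sum_mul]
    push_cast
    ring
  · have := main 0 (by omega)
    simpa using this

set_option maxHeartbeats 1600000 in
lemma omega_step (n : ℕ) : ∃ K : ℝ, 0 ≤ K ∧ ∀ m ∈ Icc (1/2:ℝ) 1, ∀ y, 0 ≤ y → y ≤ m →
    ∀ E E' : ℕ → ℂ, E 0 = 1 →
    (∀ k ≤ n, E' k = ∑ i ∈ Finset.range (k+1), E i * aa k i m) →
    Om n (y/m) E' ≤ Om n y E + K * (1-m)^2 * TT n E ^ 2 ∧ TT n E' ≤ (1 + K * (1-m)) * TT n E := by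
  obtain ⟨K0, hK0, hstep⟩ := one_step n
  obtain ⟨M, hM, htau⟩ := tau_unif n
  set K1 : ℝ := n^2*4 + 2*(1+2*n)*K0 + K0^2 with hK1
  have hK1' : 0 ≤ K1 := by positivity
  set K2 : ℝ := M * K1 + M * (5 + 4 * n) + M * (4 * n) with hK2
  have hK2' : 0 ≤ K2 := by positivity
  set K3 : ℝ := (n+1) * (2 * n + K0) with hK3
  have hK3' : 0 ≤ K3 := by positivity
  refine ⟨n * K2 + K3, by positivity, fun m hm y hy0 hym E E' hE h => ?_⟩
  obtain ⟨hs1, hs2⟩ := hstep m hm E E' h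
  have hm0 : 0 < m := by linarith [hm.1]
  have hy1 : y ≤ 1 := hym.trans hm.2
  have hq0 : 0 ≤ y / m := by positivity
  have hq1 : y / m ≤ 1 := by rw [div_le_one hm0]; exact hym
  set ε := 1 - m with hε
  have hε0 : 0 ≤ ε := by linarith [hm.2]
  have hε1 : ε ≤ 1 := by linarith [hm.1]
  have hε2 : ε^2 ≤ ε := by nlinarith
  set T := TT n E with hT
  have hT1 : 1 ≤ T := by
    have := le_TT (n := n) (k := 0) E (by omega)
    rwa [hE, norm_one] at this
  have hT2 : 1 ≤ T^2 := by nlinarith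
  constructor
  · have main : ∀ k ∈ Finset.range n, (tau n (k+1)).eval (y/m) * ((‖E' (k+1)‖^2 - 4) / (k+1)) ≤
        (tau n (k+1)).eval y * ((‖E (k+1)‖^2 - 4) / (k+1)) + ε * ((sig n (k+1)).eval y * (‖E (k+1)‖^2 - 4)
      - (tau n (k+1)).eval y * (2 * (star (E (k+1)) * XX E k).re)) + K2 * ε^2 * T^2 := by
      intro k hk'
      obtain ⟨ht1, ht2, ht3⟩ := htau k hk'
      have ht1 := ht1 m hm y hy0 hy1
      have ht2 := ht2 (y/m) hq0 hq1
      have ht3 := ht3 y hy0 hy1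
      have ht4 := tau_nonneg n (k+1) hq0 hq1
      have hk := Finset.mem_range.mp hk'
      have hkn : (k:ℝ) + 1 ≤ n := by exact_mod_cast hk
      have hk0 : (0:ℝ) ≤ k := by positivity
      have hX := XX_le E hk
      have hEk := le_TT E (show k + 1 ≤ n by omega)
      have hs := hs1 k hk
      rw [← hT] at hX hEk
      set x := XX E k
      set e := E (k+1)
      set R := (star e * x).re with hR
      have hRb : |R| ≤ 2 * T^2 := by
        refine (Complex.abs_re_le_norm _).trans ?_
        rw [norm_mul, norm_star]
        calc ‖e‖ * ‖x‖ ≤ T * (2 * T) := by gcongr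
          _ = _ := by ring
      set c : ℝ := ε * (k+1) with hc
      have hc0 : 0 ≤ c := by positivity
      have hcn : c ≤ ε * n := by rw [hc]; gcongr
      set A := e - (c:ℂ) * x with hA
      have hA2 : ‖A‖^2 = ‖e‖^2 - 2 * c * R + c^2 * ‖x‖^2 := by
        rw [hA, hR]
        simp only [← Complex.normSq_eq_norm_sq, Complex.normSq_apply]
        simp
        ring
      have hAn : ‖A‖ ≤ (1 + 2 * n) * T := by
        refine (norm_sub_le _ _).trans ?_
        rw [norm_mul, Complex.norm_real, Real.norm_of_nonneg hc0]
        have : c * ‖x‖ ≤ (ε * n) * (2 * T) := by gcongr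
        have h2 : (ε * n) * (2 * T) ≤ (1 * n) * (2 * T) := by gcongr
        linarith only [this, h2, hEk]
      have hE' : ‖E' (k+1)‖ ≤ ‖A‖ + K0 * ε^2 * T := by
        have := norm_add_le A (E' (k+1) - A)
        rw [add_sub_cancel] at this
        linarith
      have hE2 : ‖E' (k+1)‖^2 ≤ ‖e‖^2 - 2 * c * R + K1 * ε^2 * T^2 := by
        have : ‖E' (k+1)‖^2 ≤ (‖A‖ + K0 * ε^2 * T)^2 := by gcongr
        have h1 : c^2 * ‖x‖^2 ≤ (ε * n)^2 * (2 * T)^2 := by gcongr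
        have h2 : ‖A‖ * (K0 * ε^2 * T) ≤ ((1 + 2 * n) * T) * (K0 * ε^2 * T) := by gcongr
        have h3 : (K0 * ε^2 * T)^2 ≤ K0^2 * ε^2 * T^2 := by
          rw [mul_pow, mul_pow]
          gcongr
        calc _ ≤ ‖A‖^2 + 2 * (‖A‖ * (K0 * ε^2 * T)) + (K0 * ε^2 * T)^2 := by linarith only [this]
          _ ≤ (‖e‖^2 - 2 * c * R + (ε * n)^2 * (2 * T)^2) + 2 * (((1 + 2 * n) * T) * (K0 * ε^2 * T)) + K0^2 * ε^2 * T^2 := by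
            rw [hA2]; linarith only [h1, h2, h3]
          _ = _ := by rw [hK1]; ring
      have hkp : (0:ℝ) < k + 1 := by positivity
      set t := (tau n (k+1)).eval (y/m)
      set t0 := (tau n (k+1)).eval y
      set s := (sig n (k+1)).eval y
      set P := (‖e‖^2 - 4 - 2 * c * R) / (k+1) with hP
      have hdiv : ∀ z : ℝ, |z| / (k+1) ≤ |z| := fun z => div_le_self (abs_nonneg z) (by linarith)
      have hPb : |P| ≤ (5 + 4 * n) * T^2 := by
        rw [hP, abs_div, abs_of_pos hkp]
        refine (hdiv _).trans ?_
        have h1 := abs_sub (‖e‖^2 - 4) (2 * c * R)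
        have h2 : |‖e‖^2 - 4| ≤ 5 * T^2 := by
          have : ‖e‖^2 ≤ T^2 := by gcongr
          have h5 := sq_nonneg ‖e‖
          rw [abs_le]; constructor <;> linarith only [this, h5, hT2]
        have h3 : |2 * c * R| ≤ 2 * n * (2 * T^2) := by
          rw [abs_mul, abs_of_nonneg (by positivity)]
          have : c ≤ n := hcn.trans (mul_le_of_le_one_left (Nat.cast_nonneg n) hε1)
          gcongr
        linarith only [h1, h2, h3]
      have a1 : t * ((‖E' (k+1)‖^2 - 4) / (k+1)) ≤ t * (P + K1 * ε^2 * T^2) := by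
        gcongr
        rw [div_le_iff₀ hkp, add_mul, hP, div_mul_cancel₀ _ hkp.ne']
        have : 0 ≤ K1 * ε^2 * T^2 * k := by positivity
        linarith only [this, hE2]
      have a2 : t * (K1 * ε^2 * T^2) ≤ M * (K1 * ε^2 * T^2) := by
        gcongr; exact (le_abs_self _).trans ht2
      have a3 : (t - (t0 + ε * ((k+1) * s))) * P ≤ (M * ε^2) * ((5 + 4 * n) * T^2) := by
        refine (le_abs_self _).trans ?_
        rw [abs_mul]
        gcongr
      have a4 : -(s * R) ≤ M * (2 * T^2) := by
        refine (neg_le_abs _).trans ?_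
        rw [abs_mul]
        gcongr
      have a5 : -(2 * ε * c * (s * R)) ≤ M * (4 * n) * ε^2 * T^2 := by
        calc -(2 * ε * c * (s * R)) = (2 * ε * c) * (-(s * R)) := by ring
          _ ≤ (2 * ε * c) * (M * (2 * T^2)) := by gcongr
          _ ≤ (2 * ε * (ε * n)) * (M * (2 * T^2)) := by gcongr
          _ = _ := by ring
      have a6 : (t0 + ε * ((k+1) * s)) * P = t0 * ((‖e‖^2 - 4) / (k+1)) + ε * (s * (‖e‖^2 - 4) - t0 * (2 * R))
          - 2 * ε * c * (s * R) := by
        rw [hP, hc]; field_simp; ring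
      calc _ ≤ t * P + t * (K1 * ε^2 * T^2) := by linarith only [a1]
        _ ≤ (t0 + ε * ((k+1) * s)) * P + (M * ε^2) * ((5 + 4 * n) * T^2) + M * (K1 * ε^2 * T^2) := by linarith only [a2, a3]
        _ ≤ t0 * ((‖e‖^2 - 4) / (k+1)) + ε * (s * (‖e‖^2 - 4) - t0 * (2 * R)) + M * (4 * n) * ε^2 * T^2 + (M * ε^2) * ((5 + 4 * n) * T^2) + M * (K1 * ε^2 * T^2) := by
          rw [a6]; linarith only [a5]
        _ = _ := by rw [hK2]; ring
    have := Finset.sum_le_sum main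
    rw [Finset.sum_add_distrib, Finset.sum_add_distrib, ← Finset.mul_sum] at this
    have hsg := mul_le_mul_of_nonneg_left (sign_id n hy0 hy1 E hE) hε0
    simp only [Finset.sum_const, Finset.card_range, nsmul_eq_mul] at this
    have h7 : 0 ≤ K3 * ε^2 * T^2 := by positivity
    simp only [Om]
    linarith
  · have hb : ∀ k ∈ Finset.range (n+1), ‖E' k‖ ≤ ‖E k‖ + (2 * n + K0) * ε * T := by
      intro k hk
      have hk := Finset.mem_range.mp hk
      have h8 : K0 * ε^2 * T ≤ K0 * ε * T := by gcongr
      rcases k with _ | k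
      · have := norm_add_le (E 0) (E' 0 - E 0)
        rw [add_sub_cancel] at this
        have h9 : 0 ≤ 2 * n * ε * T := by positivity
        linarith
      · have hs := hs1 k (by omega)
        have hX := XX_le (n := n) E (show k < n by omega)
        have hkn : (k:ℝ) + 1 ≤ n := by exact_mod_cast (show k + 1 ≤ n by omega)
        have h1 := norm_add_le (E (k+1) - ((ε * (k+1) : ℝ):ℂ) * XX E k) (E' (k+1) - (E (k+1) - ((ε * (k+1) : ℝ):ℂ) * XX E k))
        rw [add_sub_cancel] at h1
        have h2 := norm_sub_le (E (k+1)) (((ε * (k+1) : ℝ):ℂ) * XX E k)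
        rw [norm_mul, Complex.norm_real, Real.norm_of_nonneg (by positivity)] at h2
        have h3 : ε * (k+1) * ‖XX E k‖ ≤ ε * n * (2 * T) := by gcongr
        linarith
    have := Finset.sum_le_sum hb
    rw [Finset.sum_add_distrib] at this
    simp only [Finset.sum_const, Finset.card_range, nsmul_eq_mul] at this
    have h7 : 0 ≤ n * K2 * ε * T := by positivity
    push_cast at this
    change TT n E' ≤ TT n E + _ at this
    rw [← hT] at this
    calc TT n E' ≤ _ := this
      _ ≤ T + (n+1) * ((2 * n + K0) * ε * T) + n * K2 * ε * T := by linarith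
      _ = _ := by rw [hK3]; ring

end BR

namespace BR
open Filter Topology

inductive Reach (m : ℝ) : ℕ → (ℂ → ℂ) → Prop
  | base : Reach m 0 (fun _ => 1)
  | step {j : ℕ} {u : ℂ → ℂ} {κ : ℂ} (h : Reach m j u) (hκ : ‖κ‖ = 1) : Reach m (j+1) (stp κ m u)

def DD (u : ℂ → ℂ) (k : ℕ) : ℂ := co k (Wf u)

lemma Reach.an {m : ℝ} {j : ℕ} {u : ℂ → ℂ} (h : Reach m j u) : AnalyticAt ℂ u 0 := by
  induction h with
  | base => exact analyticAt_const
  | step h hκ ih => exact stp_an ih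

lemma Reach.zero {m : ℝ} {j : ℕ} {u : ℂ → ℂ} (h : Reach m j u) : u 0 = ((m^j : ℝ) : ℂ) := by
  induction h with
  | base => simp
  | step h hκ ih => rw [stp_zero, ih]; push_cast; ring

lemma DD_zero (u : ℂ → ℂ) : DD u 0 = 1 := by
  rw [DD, co_zero]; simp [Wf]

lemma DD_one (k : ℕ) : DD (fun _ => 1) (k+1) = 0 := by
  have : Wf (fun _ => 1) = fun _ => 1 := by funext z; simp [Wf]
  rw [DD, this, ← coeff_ser, ser_const, PowerSeries.coeff_C]; simp

lemma Om_norm {n : ℕ} {y : ℝ} {D D' : ℕ → ℂ} (h : ∀ k, ‖D k‖ = ‖D' k‖) : Om n y D = Om n y D' := by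
  simp only [Om, h]

lemma TT_norm {n : ℕ} {D D' : ℕ → ℂ} (h : ∀ k, ‖D k‖ = ‖D' k‖) : TT n D = TT n D' := by
  simp only [TT, h]

lemma reach_om (n : ℕ) : ∃ K : ℝ, 0 ≤ K ∧ ∀ m ∈ Icc (1/2:ℝ) 1, ∀ j u, Reach m j u →
    TT n (DD u) ≤ (1 + K * (1-m))^j ∧ ∀ y, 0 ≤ y → y ≤ m^j →
      Om n (y/m^j) (DD u) ≤ j * K * (1-m)^2 * (1 + K*(1-m))^(2*j) := by
  obtain ⟨K, hK0, hK⟩ := omega_step n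
  refine ⟨K, hK0, fun m hm j u h => ?_⟩
  have hm0 : 0 < m := by linarith [hm.1]
  have he : 0 ≤ 1 - m := by linarith [hm.2]
  have hc : 1 ≤ 1 + K * (1-m) := by have := mul_nonneg hK0 he; linarith
  induction h with
  | base =>
    constructor
    · rw [TT, Finset.sum_range_succ', Finset.sum_eq_zero, DD_zero]
      · simp
      · intro i _; rw [DD_one]; simp
    · intro y h0 h1
      simp only [pow_zero, div_one, CharP.cast_eq_zero, zero_mul] at h1 ⊢
      apply Finset.sum_nonpos
      intro k _
      rw [DD_one]
      apply mul_nonpos_of_nonneg_of_nonpos (tau_nonneg _ _ h0 h1)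
      apply div_nonpos_of_nonpos_of_nonneg
      · norm_num
      · positivity
  | @step j u κ h hκ ih =>
    have hκ0 : κ ≠ 0 := by intro h0; rw [h0] at hκ; simp at hκ
    set E : ℕ → ℂ := fun k => (κ^k)⁻¹ * DD u k with hE
    set E' : ℕ → ℂ := fun k => (κ^k)⁻¹ * DD (stp κ m u) k with hE'
    have hn : ∀ (D : ℕ → ℂ) k, ‖D k‖ = ‖(κ^k)⁻¹ * D k‖ := by
      intro D k; simp [hκ]
    have hu0 : u 0 ≠ 0 := by
      rw [h.zero]; exact_mod_cast (by positivity)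
    have hstep : ∀ k ≤ n, E' k = ∑ i ∈ Finset.range (k+1), E i * aa k i m := by
      intro k _
      simp only [hE', hE, DD]
      rw [co_stp κ hm0.ne' h.an hu0, Finset.mul_sum]
      refine Finset.sum_congr rfl fun i hi => ?_
      have hi : i ≤ k := by have := Finset.mem_range.mp hi; omega
      have : κ^k = κ^i * κ^(k-i) := by rw [← pow_add]; congr 1; omega
      rw [this]
      field_simp
    have hE0 : E 0 = 1 := by simp [hE, DD_zero]
    constructor
    · have := (hK m hm 0 le_rfl hm0.le E E' hE0 hstep).2
      rw [← TT_norm (hn (DD u)), ← TT_norm (hn (DD (stp κ m u)))] at this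
      refine this.trans ?_
      rw [pow_succ']
      gcongr
      exact ih.1
    · intro y h0 h1
      have hp : 0 < m^j := by positivity
      have := (hK m hm (y/m^j) (by positivity) (by rw [div_le_iff₀ hp, ← pow_succ']; exact h1) E E' hE0 hstep).1
      rw [← TT_norm (hn (DD u)), ← Om_norm (hn (DD (stp κ m u))), ← Om_norm (hn (DD u)), div_div, ← pow_succ] at this
      have i2 := ih.2 y h0 (h1.trans (pow_le_pow_of_le_one hm0.le hm.2 (Nat.le_succ j)))
      have i1 : TT n (DD u)^2 ≤ ((1 + K * (1-m))^j)^2 := by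
        have : 0 ≤ TT n (DD u) := Finset.sum_nonneg fun _ _ => norm_nonneg _
        gcongr; exact ih.1
      rw [← pow_mul, mul_comm j 2] at i1
      have i3 : (1 + K * (1-m))^(2*j) ≤ (1 + K * (1-m))^(2*(j+1)) := pow_le_pow_right₀ hc (by omega)
      have i4 : K * (1-m)^2 * TT n (DD u)^2 ≤ K * (1-m)^2 * (1 + K * (1-m))^(2*(j+1)) := by
        gcongr; exact i1.trans i3
      have i5 : j * K * (1-m)^2 * (1 + K*(1-m))^(2*j) ≤ j * K * (1-m)^2 * (1 + K*(1-m))^(2*(j+1)) := by gcongr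
      push_cast
      linarith

/-! ### The Lebedev–Milin inequality -/

lemma LM (h D : ℕ → ℂ) (hrec : ∀ j : ℕ, 2 * ((j:ℂ)+1) * h (j+1) = ∑ k ∈ Finset.range (j+1), D (k+1) * h (j-k)) (n : ℕ) :
    ∑ i ∈ Finset.range (n+1), ‖h i‖^2 ≤ ‖h 0‖^2 * (n+1) *
      Real.exp (∑ k ∈ Finset.range n, (‖D (k+1)‖^2/4 - 1) * (1/(k+1) - 1/(n+1))) := by
  induction n with
  | zero => simp
  | succ n ih =>
    set B := ∑ i ∈ Finset.range (n+1), ‖h i‖^2 with hB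
    set A := ∑ k ∈ Finset.range (n+1), ‖D (k+1)‖^2/4 with hA
    have hB0 : 0 ≤ B := Finset.sum_nonneg fun _ _ => by positivity
    have hA0 : 0 ≤ A := Finset.sum_nonneg fun _ _ => by positivity
    have h1 : ((n:ℝ)+1)^2 * ‖h (n+1)‖^2 ≤ A * B := by
      have e1 : 2 * ((n:ℝ)+1) * ‖h (n+1)‖ ≤ ∑ k ∈ Finset.range (n+1), ‖D (k+1)‖ * ‖h (n-k)‖ := by
        have := congrArg norm (hrec n)
        rw [norm_mul, norm_mul] at this
        have e : ‖(n:ℂ)+1‖ = n + 1 := by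
          rw [show (n:ℂ)+1 = ((n+1:ℕ):ℂ) by push_cast; ring, Complex.norm_natCast]; push_cast; ring
        rw [e] at this
        norm_num at this
        rw [this]
        refine (norm_sum_le _ _).trans (le_of_eq ?_)
        simp
      have e2 := Finset.sum_mul_sq_le_sq_mul_sq (Finset.range (n+1)) (fun k => ‖D (k+1)‖) (fun k => ‖h (n-k)‖)
      have e3 : ∑ k ∈ Finset.range (n+1), ‖h (n-k)‖^2 = B := by
        have := Finset.sum_range_reflect (fun k => ‖h k‖^2) (n+1)
        simpa using this
      have e4 : ∑ k ∈ Finset.range (n+1), ‖D (k+1)‖^2 = 4 * A := by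
        rw [hA, Finset.mul_sum]; refine Finset.sum_congr rfl fun _ _ => by ring
      rw [e3, e4] at e2
      have e5 : (2 * ((n:ℝ)+1) * ‖h (n+1)‖)^2 ≤ _ := pow_le_pow_left₀ (by positivity) e1 2
      nlinarith
    have hn : (0:ℝ) < n + 1 := by positivity
    have hn2 : (0:ℝ) < n + 2 := by positivity
    have h2 : ∑ i ∈ Finset.range (n+2), ‖h i‖^2 ≤ B * (1 + A/(n+1)^2) := by
      rw [Finset.sum_range_succ, ← hB]
      have : ‖h (n+1)‖^2 ≤ A * B / (n+1)^2 := by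
        rw [le_div_iff₀ (by positivity)]; linarith
      calc _ ≤ B + A * B / (n+1)^2 := by linarith
        _ = _ := by ring
    set s := (A - (n+1)) * (1/(n+1) - 1/(n+2)) with hs
    have h3 : 1 + A/(n+1)^2 ≤ ((n+2)/(n+1)) * Real.exp s := by
      have := Real.add_one_le_exp s
      calc 1 + A/((n:ℝ)+1)^2 = ((n+2)/(n+1)) * (s + 1) := by rw [hs]; field_simp; ring
        _ ≤ _ := by gcongr
    have h4 : ∑ k ∈ Finset.range (n+1), (‖D (k+1)‖^2/4 - 1) * (1/(k+1) - 1/((n+1:ℕ)+1)) = 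
        ∑ k ∈ Finset.range n, (‖D (k+1)‖^2/4 - 1) * (1/(k+1) - 1/(n+1)) + s := by
      have e : s = ∑ k ∈ Finset.range (n+1), (‖D (k+1)‖^2/4 - 1) * (1/(n+1) - 1/(n+2)) := by
        rw [← Finset.sum_mul, Finset.sum_sub_distrib, ← hA, hs]; simp
      have e' : ∑ k ∈ Finset.range n, (‖D (k+1)‖^2/4 - 1) * (1/((k:ℝ)+1) - 1/(n+1)) = ∑ k ∈ Finset.range (n+1), (‖D (k+1)‖^2/4 - 1) * (1/(k+1) - 1/(n+1)) := by
        rw [Finset.sum_range_succ]; simp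
      rw [e, e', ← Finset.sum_add_distrib]
      refine Finset.sum_congr rfl fun k _ => ?_
      push_cast
      ring
    rw [h4, Real.exp_add]
    set S := Real.exp (∑ k ∈ Finset.range n, (‖D (k+1)‖^2/4 - 1) * (1/((k:ℝ)+1) - 1/(n+1)))
    calc _ ≤ B * (1 + A/(n+1)^2) := h2
      _ ≤ (‖h 0‖^2 * (n+1) * S) * (((n+2)/(n+1)) * Real.exp s) := by gcongr
      _ = _ := by push_cast; field_simp; ring

lemma reach_bound (n : ℕ) : ∃ K : ℝ, 0 ≤ K ∧ ∀ m ∈ Icc (1/2:ℝ) 1, ∀ j u, Reach m j u →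
    ∃ h : ℂ → ℂ, AnalyticAt ℂ h 0 ∧ (∀ᶠ z in 𝓝 0, h z ^ 2 = u z) ∧
      ∑ i ∈ Finset.range (n+1), ‖co i h‖^2 ≤ (n+1) * m^j * Real.exp (j * K * (1-m)^2 * (1 + K*(1-m))^(2*j)) := by
  obtain ⟨K, hK0, hK⟩ := reach_om n
  refine ⟨K, hK0, fun m hm j u h => ?_⟩
  have hm0 : 0 < m := by linarith [hm.1]
  have hmj : 0 < m^j := by positivity
  have he : 0 ≤ 1 - m := by linarith [hm.2]
  have hu0 : u 0 ≠ 0 := by rw [h.zero]; exact_mod_cast hmj.ne'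
  have hs : u 0 ∈ Complex.slitPlane := by
    rw [h.zero]; exact Complex.ofReal_mem_slitPlane.mpr hmj
  set H : ℂ → ℂ := fun z => Complex.exp (Complex.log (u z) / 2) with hH
  have hHa : AnalyticAt ℂ H 0 := by
    have := (h.an.clog hs).fun_div (analyticAt_const (v := (2:ℂ))) (by norm_num)
    exact this.cexp
  have hu' : ∀ᶠ z in 𝓝 0, u z ≠ 0 := h.an.continuousAt.eventually_ne hu0
  have hsq : ∀ᶠ z in 𝓝 0, H z ^ 2 = u z := by
    filter_upwards [hu'] with z hz
    simp only [hH]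
    rw [← Complex.exp_nat_mul, show ((2:ℕ):ℂ) * (Complex.log (u z) / 2) = Complex.log (u z) by push_cast; ring, Complex.exp_log hz]
  refine ⟨H, hHa, hsq, ?_⟩
  set w : ℂ → ℂ := fun z => z * (deriv u z / u z) with hw
  have hwd := h.an.deriv.fun_div h.an hu0
  have hwa : AnalyticAt ℂ w 0 := an_id.fun_mul hwd
  have hw0 : co 0 w = 0 := by rw [co_zero]; simp [hw]
  have hwk : ∀ k, co (k+1) w = DD u (k+1) := by
    intro k
    have : Wf u = fun z => (1:ℂ) + w z := rfl
    rw [DD, this, ← coeff_ser (k+1) (fun z => 1 + w z), ser_add analyticAt_const hwa, ser_const, map_add, PowerSeries.coeff_C, coeff_ser]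
    simp
  have hde : (fun z => (2:ℂ) * (z * deriv H z)) =ᶠ[𝓝 0] fun z => w z * H z := by
    have h1 : ∀ᶠ z in 𝓝 0, (fun z => H z ^ 2) =ᶠ[𝓝 z] u := by
      exact (show (fun z => H z ^ 2) =ᶠ[𝓝 0] u from hsq).eventuallyEq_nhds
    filter_upwards [h1, hHa.eventually_analyticAt, hu', hsq] with z hz hz2 hz3 hz4
    have hd := (hz2.differentiableAt.hasDerivAt.fun_pow 2).congr_of_eventuallyEq hz.symm
    simp only [hw]
    rw [hd.deriv, ← hz4]
    have : H z ≠ 0 := by intro h0; rw [h0] at hz4; apply hz3; rw [← hz4]; simp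
    field_simp
    push_cast
    ring
  have hrec : ∀ j : ℕ, 2 * ((j:ℂ)+1) * co (j+1) H = ∑ k ∈ Finset.range (j+1), DD u (k+1) * co (j-k) H := by
    intro j
    have h1 : co (j+1) (fun z => (2:ℂ) * (z * deriv H z)) = 2 * ((j:ℂ)+1) * co (j+1) H := by
      rw [← coeff_ser, ser_const_mul _ (an_id.fun_mul hHa.deriv), PowerSeries.coeff_C_mul, coeff_ser, co_z_deriv _ hHa]
      push_cast; ring
    rw [← h1, co_congr hde, ← coeff_ser, ser_mul hwa hHa, PowerSeries.coeff_mul, 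
      Finset.Nat.sum_antidiagonal_eq_sum_range_succ_mk, Finset.sum_range_succ']
    simp only [coeff_ser, hw0, zero_mul, add_zero]
    refine Finset.sum_congr rfl fun k _ => ?_
    rw [hwk, Nat.add_sub_add_right]
  have main := LM (fun j => co j H) (DD u) hrec n
  have hH0 : ‖co 0 H‖^2 = m^j := by
    rw [co_zero, ← norm_pow, hsq.self_of_nhds, h.zero, Complex.norm_real, Real.norm_of_nonneg hmj.le]
  rw [hH0] at main
  refine main.trans ?_
  rw [mul_comm (m^j)]
  gcongr
  have hO := (hK m hm j u h).2 (m^j) hmj.le le_rfl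
  rw [div_self hmj.ne'] at hO
  have e : ∑ k ∈ Finset.range n, (‖DD u (k+1)‖^2/4 - 1) * (1/((k:ℝ)+1) - 1/(n+1)) = Om n 1 (DD u) * (1 / (4 * (n+1))) := by
    rw [Om, Finset.sum_mul]
    refine Finset.sum_congr rfl fun k hk => ?_
    have := Finset.mem_range.mp hk
    rw [tau_one (by omega)]
    push_cast
    field_simp
  rw [e]
  set R := j * K * (1-m)^2 * (1 + K*(1-m))^(2*j) with hR
  have hR0 : 0 ≤ R := by positivity
  have hq : (1:ℝ) / (4 * (n+1)) ≤ 1 := by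
    rw [div_le_one (by positivity)]
    have : (0:ℝ) ≤ n := by positivity
    linarith
  calc _ ≤ R * (1 / (4 * (n+1))) := by gcongr
    _ ≤ R * 1 := by gcongr
    _ = R := mul_one R

end BR

namespace BR
open Filter Topology

/-- holomorphic on the disc with a differentiable left inverse on the image -/
def Uni (φ : ℂ → ℂ) : Prop := DifferentiableOn ℂ φ (ball 0 1) ∧
  ∃ g : ℂ → ℂ, DifferentiableOn ℂ g (φ '' ball 0 1) ∧ ∀ z ∈ ball (0:ℂ) 1, g (φ z) = z

lemma Uni.isOpen {φ : ℂ → ℂ} (h : Uni φ) : IsOpen (φ '' ball 0 1) := by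
  obtain ⟨hd, g, hg, hgi⟩ := h
  rcases (hd.analyticOnNhd isOpen_ball).is_constant_or_isOpen (convex_ball (0:ℂ) 1).isPreconnected with ⟨w, hw⟩ | h
  · have h0 : (0:ℂ) ∈ ball (0:ℂ) 1 := by simp
    have h1 : (1/2:ℂ) ∈ ball (0:ℂ) 1 := by simp; norm_num
    have := hgi _ h1
    rw [hw _ h1, ← hw 0 h0, hgi 0 h0] at this
    norm_num at this
  · exact h _ subset_rfl isOpen_ball

lemma Uni.inv {φ : ℂ → ℂ} (h : Uni φ) : ∃ g : ℂ → ℂ, DifferentiableOn ℂ g (φ '' ball 0 1) ∧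
    (∀ z ∈ ball (0:ℂ) 1, g (φ z) = z) ∧ ∀ z ∈ ball (0:ℂ) 1, deriv g (φ z) * deriv φ z = 1 := by
  have ho := h.isOpen
  obtain ⟨hd, g, hg, hgi⟩ := h
  refine ⟨g, hg, hgi, fun z hz => ?_⟩
  have h1 : HasDerivAt g _ (φ z) := (hg.differentiableAt (ho.mem_nhds (mem_image_of_mem φ hz))).hasDerivAt
  have h2 : HasDerivAt φ _ z := (hd.differentiableAt (isOpen_ball.mem_nhds hz)).hasDerivAt
  have h3 := h1.comp z h2
  have h4 : HasDerivAt (g ∘ φ) 1 z := by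
    refine (hasDerivAt_id z).congr_of_eventuallyEq ?_
    filter_upwards [isOpen_ball.mem_nhds hz] with w hw
    exact hgi w hw
  exact h3.unique h4

lemma hol_log {f : ℂ → ℂ} (hf : DifferentiableOn ℂ f (ball 0 1)) (h0 : ∀ z ∈ ball (0:ℂ) 1, f z ≠ 0) :
    ∃ L : ℂ → ℂ, (∀ z ∈ ball (0:ℂ) 1, HasDerivAt L (deriv f z / f z) z) ∧
      ∀ z ∈ ball (0:ℂ) 1, f z = f 0 * Complex.exp (L z) := by
  have hd : DifferentiableOn ℂ (fun z => deriv f z / f z) (ball 0 1) := (hf.deriv isOpen_ball).fun_div hf h0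
  obtain ⟨L, hL0, hL⟩ := hd.isExactOn_ball.with_val_at 0 0
  refine ⟨L, hL, fun z hz => ?_⟩
  have key : ∀ z ∈ ball (0:ℂ) 1, HasDerivAt (fun z => f z * Complex.exp (-L z)) 0 z := by
    intro z hz
    have h1 : HasDerivAt f _ z := (hf.differentiableAt (isOpen_ball.mem_nhds hz)).hasDerivAt
    have := h1.fun_mul ((hL z hz).fun_neg.cexp)
    refine this.congr_deriv ?_
    have e : deriv f z / f z * f z = deriv f z := div_mul_cancel₀ _ (h0 z hz)
    linear_combination (-Complex.exp (-L z)) * e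
  have h1 := isOpen_ball.is_const_of_deriv_eq_zero (convex_ball (0:ℂ) 1).isPreconnected
    (fun z hz => (key z hz).differentiableAt.differentiableWithinAt) (fun z hz => (key z hz).deriv) hz
    (show (0:ℂ) ∈ ball (0:ℂ) 1 by simp)
  simp only [hL0, neg_zero, Complex.exp_zero, mul_one] at h1
  rw [← h1, mul_assoc, ← Complex.exp_add]
  simp

lemma hol_sqrt {f : ℂ → ℂ} (hf : DifferentiableOn ℂ f (ball 0 1)) (h0 : ∀ z ∈ ball (0:ℂ) 1, f z ≠ 0) {a : ℂ}
    (ha : f 0 = a ^ 2) : ∃ r : ℂ → ℂ, DifferentiableOn ℂ r (ball 0 1) ∧ r 0 = a ∧ ∀ z ∈ ball (0:ℂ) 1, r z ^ 2 = f z := by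
  obtain ⟨L, hL, hLe⟩ := hol_log hf h0
  refine ⟨fun z => a * Complex.exp ((L z - L 0) / 2), ?_, by simp, fun z hz => ?_⟩
  · intro z hz
    exact (((hL z hz).differentiableAt.sub_const _).div_const 2).cexp.const_mul a |>.differentiableWithinAt
  · have h00 : (0:ℂ) ∈ ball (0:ℂ) 1 := by simp
    have e0 := hLe 0 h00
    have : Complex.exp (L 0) = 1 := by
      have := h0 0 h00
      exact mul_left_cancel₀ this (by rw [← e0, mul_one])
    rw [mul_pow, ← Complex.exp_nat_mul, hLe z hz, ha]
    congr 1
    rw [show ((2:ℕ):ℂ) * ((L z - L 0) / 2) = L z - L 0 by push_cast; ring, Complex.exp_sub, this, div_one]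

/-- If the image contains a circle, it contains its inside. -/
lemma circle_lemma {φ : ℂ → ℂ} (h : Uni φ) {s : ℝ} (hs : 0 < s)
    (hc : sphere (0:ℂ) s ⊆ φ '' ball 0 1) : ball (0:ℂ) s ⊆ φ '' ball 0 1 := by
  intro c hcb
  by_contra hcn
  have ho := h.isOpen
  obtain ⟨g, hg, hgi, hgd⟩ := h.inv
  have hne : ∀ z ∈ ball (0:ℂ) 1, φ z - c ≠ 0 := by
    intro z hz h0
    exact hcn ⟨z, hz, by linear_combination h0⟩
  obtain ⟨L, hL, -⟩ := hol_log (h.1.sub_const c) hne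
  have h1 : (∮ z in C(0, s), (z - c)⁻¹) = 0 := by
    apply circleIntegral.integral_eq_zero_of_hasDerivWithinAt' (f := L ∘ g)
    intro w hw
    rw [abs_of_pos hs] at hw
    obtain ⟨z, hz, rfl⟩ := hc hw
    have e1 : HasDerivAt g _ (φ z) := (hg.differentiableAt (ho.mem_nhds (mem_image_of_mem φ hz))).hasDerivAt
    have e2 := hL z hz
    rw [deriv_sub_const] at e2
    rw [← hgi z hz] at e2
    have e3 := e2.comp (φ z) e1
    rw [hgi z hz] at e3
    refine HasDerivAt.hasDerivWithinAt ?_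
    refine e3.congr_deriv ?_
    change deriv φ z / (φ z - c) * deriv g (φ z) = (φ z - c)⁻¹
    rw [div_mul_eq_mul_div, mul_comm (deriv φ z), hgd z hz, one_div]
  rw [circleIntegral.integral_sub_inv_of_mem_ball hcb] at h1
  simp [Real.pi_ne_zero] at h1

lemma deriv_lower {φ : ℂ → ℂ} (h : Uni φ) (h0 : φ 0 = 0) {s : ℝ} (hs : 0 < s)
    (hc : ball (0:ℂ) s ⊆ φ '' ball 0 1) : s ≤ ‖deriv φ 0‖ := by
  obtain ⟨g, hg, hgi, hgd⟩ := h.inv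
  have h00 : (0:ℂ) ∈ ball (0:ℂ) 1 := by simp
  have hg0 : g 0 = 0 := by have := hgi 0 h00; rwa [h0] at this
  have h1 : ‖deriv g 0‖ ≤ 1 / s := by
    apply Complex.norm_deriv_le_div_of_mapsTo_ball (hg.mono hc) _ hs
    intro w hw
    obtain ⟨z, hz, rfl⟩ := hc hw
    rw [hgi z hz, hg0]
    exact ball_subset_closedBall hz
  have h2 := congrArg norm (hgd 0 h00)
  rw [h0, norm_mul, norm_one] at h2
  rw [le_div_iff₀ hs] at h1
  have h3 : 0 ≤ ‖deriv φ 0‖ := norm_nonneg _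
  nlinarith

lemma mob_bound {s : ℝ} (h0 : 0 ≤ s) (h1 : s < 1) {w : ℂ} (hw : ‖w‖ < 1) :
    1 - (s:ℂ) * w ≠ 0 ∧ ‖((s:ℂ) - w) / (1 - s * w)‖ < 1 := by
  have hne : 1 - (s:ℂ) * w ≠ 0 := by
    intro h
    have : (s:ℂ) * w = 1 := by linear_combination -h
    have := congrArg norm this
    rw [norm_mul, Complex.norm_real, Real.norm_of_nonneg h0, norm_one] at this
    nlinarith [norm_nonneg w]
  refine ⟨hne, ?_⟩
  rw [norm_div, div_lt_one (norm_pos_iff.mpr hne)]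
  apply lt_of_pow_lt_pow_left₀ 2 (norm_nonneg _)
  have e : ‖1 - (s:ℂ) * w‖^2 - ‖(s:ℂ) - w‖^2 = (1 - s^2) * (1 - ‖w‖^2) := by
    simp only [← Complex.normSq_eq_norm_sq, Complex.normSq_apply]
    simp
    ring
  have : 0 < (1 - s^2) * (1 - ‖w‖^2) := by
    apply mul_pos
    · nlinarith
    · nlinarith [norm_nonneg w]
  linarith

lemma pf_diff {κ : ℂ} (hκ : ‖κ‖ = 1) {m : ℝ} (h0 : 0 ≤ m) (h1 : m < 1) {z : ℂ} (hz : ‖z‖ < 1) :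
    DifferentiableAt ℂ (pf κ m) z := by
  have : 1 - ((m:ℂ) * κ) * z ≠ 0 := by
    rw [mul_assoc]
    exact (mob_bound h0 h1 (w := κ * z) (by rwa [norm_mul, hκ, one_mul])).1
  unfold pf qf
  fun_prop (disch := assumption)

lemma koebe_step {v : ℂ → ℂ} (hv : Sch v) (hU : Uni v) {a : ℝ} (h0 : 0 < a) (h1 : a < 1)
    {c : ℂ} (hc : ‖c‖ = a^2) (hcn : c ∉ v '' ball 0 1) :
    ∃ (κ : ℂ) (v1 : ℂ → ℂ), ‖κ‖ = 1 ∧ Sch v1 ∧ Uni v1 ∧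
      (∀ z ∈ ball (0:ℂ) 1, v z = pf κ (2*a/(1+a^2)) (v1 z)) ∧
      deriv v 0 = ((2*a/(1+a^2) : ℝ):ℂ) * deriv v1 0 := by
  have hs0 : (0:ℝ) ≤ a^2 := by positivity
  have hs1 : a^2 < 1 := by nlinarith
  have hc0 : c ≠ 0 := by
    intro h; rw [h, norm_zero] at hc; have : 0 < a^2 := by positivity
    linarith
  have haC : (a:ℂ) ≠ 0 := by exact_mod_cast h0.ne'
  set κ : ℂ := (a:ℂ)^2 / c with hκd
  have hκ : ‖κ‖ = 1 := by
    rw [hκd, norm_div, norm_pow, Complex.norm_real, Real.norm_of_nonneg h0.le, hc]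
    exact div_self (by positivity)
  have hκ0 : κ ≠ 0 := by intro h; rw [h] at hκ; simp at hκ
  have hκc : κ * c = (a:ℂ)^2 := by rw [hκd]; field_simp
  have hvn : ∀ z ∈ ball (0:ℂ) 1, ‖κ * v z‖ < 1 := by
    intro z hz
    rw [norm_mul, hκ, one_mul]
    simpa using hv.maps hz
  set T : ℂ → ℂ := fun z => (((a^2:ℝ):ℂ) - κ * v z) / (1 - ((a^2:ℝ):ℂ) * (κ * v z)) with hT
  have hTd : DifferentiableOn ℂ T (ball 0 1) :=
    ((hv.diff.const_mul κ).const_sub _).fun_div (((hv.diff.const_mul κ).const_mul _).const_sub _)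
      (fun z hz => (mob_bound hs0 hs1 (hvn z hz)).1)
  have hT0 : ∀ z ∈ ball (0:ℂ) 1, T z ≠ 0 := by
    intro z hz
    refine div_ne_zero ?_ (mob_bound hs0 hs1 (hvn z hz)).1
    intro h
    apply hcn
    refine ⟨z, hz, ?_⟩
    apply mul_left_cancel₀ hκ0
    rw [hκc]
    push_cast at h
    linear_combination -h
  have hT1 : T 0 = (a:ℂ)^2 := by simp [hT, hv.zero]
  obtain ⟨r, hrd, hr0, hr⟩ := hol_sqrt hTd hT0 hT1
  have hrn : ∀ z ∈ ball (0:ℂ) 1, ‖r z‖ < 1 := by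
    intro z hz
    have := (mob_bound hs0 hs1 (hvn z hz)).2
    change ‖T z‖ < 1 at this
    rw [← hr z hz, norm_pow] at this
    nlinarith [norm_nonneg (r z)]
  set v1 : ℂ → ℂ := fun z => κ⁻¹ * (((a:ℂ) - r z) / (1 - a * r z)) with hv1
  have hS : Sch v1 := by
    refine ⟨?_, ?_, ?_⟩
    · exact ((hrd.const_sub _).fun_div ((hrd.const_mul _).const_sub _)
        (fun z hz => (mob_bound h0.le h1 (hrn z hz)).1)).const_mul _
    · intro z hz
      simp only [mem_ball_zero_iff, hv1]
      rw [norm_mul, norm_inv, hκ, inv_one, one_mul]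
      exact (mob_bound h0.le h1 (hrn z hz)).2
    · simp [hv1, hr0]
  set m : ℝ := 2*a/(1+a^2) with hm
  have hm0 : 0 ≤ m := by positivity
  have hm1 : m < 1 := by
    rw [hm, div_lt_one (by positivity)]; nlinarith [sq_pos_of_pos (sub_pos.mpr h1)]
  have hpf : ∀ z ∈ ball (0:ℂ) 1, v z = pf κ m (v1 z) := by
    intro z hz
    obtain ⟨n1, -⟩ := mob_bound h0.le h1 (hrn z hz)
    obtain ⟨n2, -⟩ := mob_bound hs0 hs1 (hvn z hz)
    have hw : κ * v1 z = ((a:ℂ) - r z) / (1 - a * r z) := by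
      simp only [hv1]; field_simp
    have hwn : ‖κ * v1 z‖ < 1 := by rw [hw]; exact (mob_bound h0.le h1 (hrn z hz)).2
    obtain ⟨n3, -⟩ := mob_bound hm0 hm1 hwn
    obtain ⟨n4, -⟩ := mob_bound h0.le h1 (w := - r z) (by rw [norm_neg]; exact hrn z hz)
    have hrz : r z ^ 2 * (1 - (a:ℂ)^2 * (κ * v z)) = (a:ℂ)^2 - κ * v z := by
      rw [hr z hz, hT]
      push_cast at n2 ⊢
      exact div_mul_cancel₀ _ n2
    have n5 : (1:ℂ) + (a:ℂ)^2 ≠ 0 := by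
      have : (1 + a^2 : ℝ) ≠ 0 := by positivity
      exact_mod_cast this
    have hkv : κ * v z * (1 - (a:ℂ)^2 * r z^2) = (a:ℂ)^2 - r z^2 := by linear_combination hrz
    have hq : (m - κ * v1 z) * (1 - a * (- r z)) = ((a:ℂ) + r z) * (1 - m * (κ * v1 z)) := by
      rw [hw, hm]
      push_cast
      field_simp
      ring
    apply mul_left_cancel₀ hκ0
    have n6 : 1 - ((m:ℂ) * κ) * v1 z ≠ 0 := by rwa [mul_assoc]
    have n7 : 1 - (a:ℂ)^2 * r z^2 ≠ 0 := by
      have := mul_ne_zero n1 n4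
      intro h; apply this; linear_combination h
    have goal1 : κ * v z = (κ * v1 z) * ((m - κ * v1 z) * (1 - ((m:ℂ) * κ) * v1 z)⁻¹) := by
      rw [← div_eq_mul_inv, ← mul_div_assoc, eq_div_iff n6]
      apply mul_right_cancel₀ n7
      have hw' : κ * v1 z * (1 - a * r z) = a - r z := by rw [hw]; field_simp
      linear_combination (1 - m * κ * v1 z) * hkv - (κ * v1 z) * (1 - a * r z) * hq - (a + r z) * (1 - m * κ * v1 z) * hw'
    rw [goal1, pf, qf]
    ring
  refine ⟨κ, v1, hκ, hS, ⟨hS.diff, ?_⟩, hpf, ?_⟩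
  · obtain ⟨-, g, hg, hgi⟩ := hU
    refine ⟨fun w => g (pf κ m w), ?_, ?_⟩
    · refine hg.fun_comp (f := pf κ m) (s := v1 '' ball 0 1) ?_ ?_
      · rintro w ⟨z, hz, rfl⟩
        exact (pf_diff hκ hm0 hm1 (by simpa using hS.maps hz)).differentiableWithinAt
      · rintro w ⟨z, hz, rfl⟩
        exact ⟨z, hz, hpf z hz⟩
    · intro z hz
      change g (pf κ m (v1 z)) = z
      rw [← hpf z hz, hgi z hz]
  · have e : v =ᶠ[𝓝 0] fun z => pf κ m (v1 z) := by
      filter_upwards [nhds_D] with z hz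
      exact hpf z hz
    have hd1 : HasDerivAt (pf κ m) (1 * qf κ m 0 + 0 * deriv (qf κ m) 0) 0 :=
      (hasDerivAt_id (0:ℂ)).mul (qf_an κ m).differentiableAt.hasDerivAt
    rw [qf_zero] at hd1
    have hd2 : HasDerivAt v1 _ 0 := hS.an.differentiableAt.hasDerivAt
    have hd1' : HasDerivAt (pf κ m) (1 * (m:ℂ) + 0 * deriv (qf κ m) 0) (v1 0) := by rwa [hS.zero]
    have := (hd1'.comp (0:ℂ) hd2).congr_of_eventuallyEq e
    rw [this.deriv]
    ring

/-- Koebe's osculation procedure. -/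
lemma koebe_iter {v : ℂ → ℂ} (hv : Sch v) (hU : Uni v) {a : ℝ} (h0 : 0 < a) (h1 : a < 1) :
    ∃ (j : ℕ) (u w : ℂ → ℂ), Reach (2*a/(1+a^2)) j u ∧ Sch w ∧ (∀ᶠ z in 𝓝 0, v z = w z * u (w z)) ∧
      ‖deriv v 0‖ ≤ (2*a/(1+a^2))^j ∧ (2*a/(1+a^2))^j * a^2 ≤ ‖deriv v 0‖ := by
  set m : ℝ := 2*a/(1+a^2) with hm
  have hm0 : 0 < m := by positivity
  have hm1 : m < 1 := by
    rw [hm, div_lt_one (by positivity)]; nlinarith [sq_pos_of_pos (sub_pos.mpr h1)]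
  have hα : 0 < ‖deriv v 0‖ := by
    obtain ⟨g, hg, hgi, hgd⟩ := hU.inv
    have := hgd 0 (by simp)
    rw [norm_pos_iff]
    intro h; rw [h] at this; simp at this
  have hsch : ∀ w : ℂ → ℂ, Sch w → ‖deriv w 0‖ ≤ 1 := by
    intro w hw
    have := Complex.norm_deriv_le_div_of_mapsTo_ball (R₂ := 1) hw.diff (c := 0) (by
      rw [hw.zero]; exact fun z hz => ball_subset_closedBall (hw.maps hz)) one_pos
    simpa using this
  by_contra hcon
  have step : ∀ j : ℕ, ∃ u w : ℂ → ℂ, Reach m j u ∧ Sch w ∧ Uni w ∧ (∀ᶠ z in 𝓝 0, v z = w z * u (w z)) ∧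
      ‖deriv v 0‖ = m^j * ‖deriv w 0‖ := by
    intro j
    induction j with
    | zero => exact ⟨_, v, Reach.base, hv, hU, by simp, by simp⟩
    | succ j ih =>
      obtain ⟨u, w, hR, hS, hUw, he, hd⟩ := ih
      by_cases hall : sphere (0:ℂ) (a^2) ⊆ w '' ball 0 1
      · exfalso
        apply hcon
        have h2 := circle_lemma hUw (by positivity) hall
        have h3 := deriv_lower hUw hS.zero (by positivity) h2
        refine ⟨j, u, w, hR, hS, he, ?_, ?_⟩
        · rw [hd]
          exact mul_le_of_le_one_right (by positivity) (hsch w hS)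
        · rw [hd]; gcongr
      · obtain ⟨c, hc, hcn⟩ := not_subset.mp hall
        obtain ⟨κ, w1, hκ, hS1, hU1, hpf, hd1⟩ := koebe_step hS hUw h0 h1 (by simpa using hc) hcn
        refine ⟨stp κ m u, w1, hR.step hκ, hS1, hU1, ?_, ?_⟩
        · filter_upwards [he, nhds_D] with z hz hzD
          rw [hz, hpf z hzD, stp, ← hm, pf]
          ring
        · rw [hd, hd1, norm_mul, Complex.norm_real, Real.norm_of_nonneg hm0.le, pow_succ]
          ring
  obtain ⟨j, hj⟩ := exists_pow_lt_of_lt_one hα hm1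
  obtain ⟨u, w, -, hS, -, -, hd⟩ := step j
  have := hsch w hS
  have h5 : m^j * ‖deriv w 0‖ ≤ m^j := mul_le_of_le_one_right (by positivity) this
  linarith

end BR

namespace BR
open Filter Topology

lemma thmB_aux {v X : ℂ → ℂ} (hv : Sch v) (hU : Uni v) (hX : Sch X) (n : ℕ) :
    ∃ C : ℝ, ∀ a ∈ Ioo (1/2:ℝ) 1,
      ‖co (n+1) (fun z => v (X z))‖ ≤ (n+1) * (‖deriv v 0‖ / a^2) * Real.exp ((1 - 2*a/(1+a^2)) * C) := by
  obtain ⟨K, hK0, hK⟩ := reach_bound n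
  set α := ‖deriv v 0‖ with hα
  have hα0 : 0 < α := by
    obtain ⟨g, -, -, h⟩ := hU.inv
    have := h 0 (by simp)
    rw [hα, norm_pos_iff]
    intro h0
    simp [h0] at this
  set Λ := - Real.log α with hΛ
  refine ⟨Λ * K * Real.exp (2 * K * Λ), fun a ha => ?_⟩
  have ha0 : 0 < a := by linarith [ha.1]
  obtain ⟨j, u, w, hR, hw, he, hd1, hd2⟩ := koebe_iter hv hU ha0 ha.2
  set m := 2*a/(1+a^2) with hm
  have hm1 : m ≤ 1 := by
    rw [hm, div_le_one (by positivity)]; nlinarith [sq_nonneg (a-1)]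
  have hm2 : 1/2 ≤ m := by
    rw [hm, le_div_iff₀ (by positivity)]; nlinarith [ha.1, ha.2]
  have hm0 : 0 < m := by linarith
  obtain ⟨h, hh, hhu, hb⟩ := hK m ⟨hm2, hm1⟩ j u hR
  have hX' := hw.comp hX
  have hlit := littlewood hX' hh n
  have hcong : (fun z => v (X z)) =ᶠ[𝓝 0] (fun z => w (X z) * h (w (X z))^2) := by
    have t1 : Tendsto X (𝓝 0) (𝓝 0) := by
      have := hX.an.continuousAt.tendsto; rwa [hX.zero] at this
    have t2 : Tendsto w (𝓝 0) (𝓝 0) := by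
      have := hw.an.continuousAt.tendsto; rwa [hw.zero] at this
    filter_upwards [t1.eventually he, (t2.comp t1).eventually hhu] with z h1 h2
    simp only [Function.comp] at h2
    rw [h1, h2]
  rw [co_congr hcong]
  refine (hlit.trans hb).trans ?_
  have hjε : j * (1-m) ≤ Λ := by
    have h1 := Real.log_le_log hα0 hd1
    rw [Real.log_pow] at h1
    have h2 := Real.log_le_sub_one_of_pos hm0
    have h3 : (j:ℝ) * Real.log m ≤ j * (m-1) := by gcongr
    rw [hΛ]; linarith
  have he0 : 0 ≤ 1 - m := by linarith
  have hp : (1 + K*(1-m))^(2*j) ≤ Real.exp (2*K*Λ) := by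
    calc (1 + K*(1-m))^(2*j) ≤ (Real.exp (K*(1-m)))^(2*j) := by
          gcongr
          linarith [Real.add_one_le_exp (K*(1-m))]
      _ = Real.exp (2*K*(j*(1-m))) := by
          rw [← Real.exp_nat_mul]; congr 1; push_cast; ring
      _ ≤ _ := by gcongr
  have hΛ0 : 0 ≤ Λ := le_trans (by positivity) hjε
  have hq : (m:ℝ)^j ≤ α / a^2 := by
    rw [le_div_iff₀ (by positivity)]; exact hd2
  have hq2 : j * K * (1-m)^2 * (1 + K*(1-m))^(2*j) ≤ (1-m) * (Λ * K * Real.exp (2 * K * Λ)) := by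
    calc j * K * (1-m)^2 * (1 + K*(1-m))^(2*j) = (1-m) * ((j*(1-m)) * K * (1 + K*(1-m))^(2*j)) := by ring
      _ ≤ _ := by gcongr
  have := Real.exp_le_exp.2 hq2
  gcongr

lemma thmB {v X : ℂ → ℂ} (hv : Sch v) (hU : Uni v) (hX : Sch X) (n : ℕ) :
    ‖co (n+1) (fun z => v (X z))‖ ≤ (n+1) * ‖deriv v 0‖ := by
  obtain ⟨C, hC⟩ := thmB_aux hv hU hX n
  have ht : Tendsto (fun a : ℝ => (n+1) * (‖deriv v 0‖ / a^2) * Real.exp ((1 - 2*a/(1+a^2)) * C)) (𝓝[<] 1)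
      (𝓝 ((n+1) * (‖deriv v 0‖ / 1^2) * Real.exp ((1 - 2*1/(1+1^2)) * C))) := by
    apply Tendsto.mono_left _ nhdsWithin_le_nhds
    have : ContinuousAt (fun a : ℝ => (n+1) * (‖deriv v 0‖ / a^2) * Real.exp ((1 - 2*a/(1+a^2)) * C)) 1 := by
      fun_prop (disch := norm_num)
    exact this.tendsto
  have e : ((n+1) * (‖deriv v 0‖ / 1^2) * Real.exp ((1 - 2*1/(1+1^2)) * C)) = (n+1) * ‖deriv v 0‖ := by
    norm_num
  rw [e] at ht
  refine ge_of_tendsto ht ?_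
  filter_upwards [Ioo_mem_nhdsLT (show (1/2:ℝ) < 1 by norm_num)] with a ha
  exact hC a ha

lemma co_scale {f : ℂ → ℂ} (hf : AnalyticAt ℂ f 0) (ρ : ℂ) (k : ℕ) :
    co k (fun z => f (ρ * z)) = ρ^k * co k f := by
  have h1 : AnalyticAt ℂ (fun z : ℂ => ρ * z) 0 := by fun_prop
  have := co_mul_comp (q := fun _ => 1) (p := fun z => ρ * z) analyticAt_const hf h1 (by simp) (Nat.lt_succ_self k)
  simp only [one_mul] at this
  rw [this]
  have h2 : ∀ i, co k (fun z => (ρ * z)^i) = if k = i then ρ^i else 0 := by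
    intro i
    rw [← coeff_ser, ser_pow h1, ser_const_mul _ an_id, ser_id, mul_pow, ← map_pow, PowerSeries.coeff_C_mul,
      PowerSeries.coeff_X_pow]
    simp
  simp only [h2]
  simp [mul_comm]

lemma co_const_mul {f : ℂ → ℂ} (hf : AnalyticAt ℂ f 0) (c : ℂ) (k : ℕ) :
    co k (fun z => c * f z) = c * co k f := by
  rw [← coeff_ser, ser_const_mul _ hf, PowerSeries.coeff_C_mul, coeff_ser]

lemma rogosinski {φ ω : ℂ → ℂ} (hU : Uni φ) (h0 : φ 0 = 0) (hω : Sch ω) (n : ℕ) :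
    ‖co (n+1) (fun z => φ (ω z))‖ ≤ (n+1) * ‖deriv φ 0‖ := by
  have key : ∀ ρ ∈ Ioo (0:ℝ) 1, ρ^(n+1) * ‖co (n+1) (fun z => φ (ω z))‖ ≤ (n+1) * (ρ * ‖deriv φ 0‖) := by
    intro ρ hρ
    have hρc : ‖(ρ:ℂ)‖ = ρ := by simp [abs_of_pos hρ.1]
    have hρ0 : (ρ:ℂ) ≠ 0 := by exact_mod_cast hρ.1.ne'
    obtain ⟨hd, g, hg, hgi⟩ := hU
    have hsub : closedBall (0:ℂ) ρ ⊆ ball 0 1 := closedBall_subset_ball hρ.2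
    obtain ⟨M0, hM0⟩ := (isCompact_closedBall (0:ℂ) ρ).exists_bound_of_continuousOn (hd.continuousOn.mono hsub)
    set M := |M0| + 1 with hM
    have hMp : 0 < M := by positivity
    have hMc : (M:ℂ) ≠ 0 := by exact_mod_cast hMp.ne'
    have hMb : ∀ z ∈ closedBall (0:ℂ) ρ, ‖φ z‖ < M := fun z hz => by
      have := hM0 z hz
      have := le_abs_self M0
      linarith
    have hmap : MapsTo (fun z : ℂ => ρ * z) (ball 0 1) (closedBall 0 ρ) := by
      intro z hz
      have : ‖z‖ < 1 := by simpa using hz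
      simp only [mem_closedBall, dist_zero_right, norm_mul, hρc]
      nlinarith [hρ.1]
    have hmap' : MapsTo (fun z : ℂ => ρ * z) (ball 0 1) (ball 0 1) := fun z hz => hsub (hmap hz)
    have hv : Sch (fun z => (M:ℂ)⁻¹ * φ (ρ * z)) := by
      refine ⟨?_, ?_, by simp [h0]⟩
      · exact (hd.fun_comp (by fun_prop) hmap').const_mul _
      · intro z hz
        simp only [mem_ball, dist_zero_right, norm_mul, norm_inv, Complex.norm_real, Real.norm_of_nonneg hMp.le]
        rw [inv_mul_lt_iff₀ hMp, mul_one]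
        exact hMb _ (hmap hz)
    have hvU : Uni (fun z => (M:ℂ)⁻¹ * φ (ρ * z)) := by
      refine ⟨hv.diff, fun w => (ρ:ℂ)⁻¹ * g (M * w), ?_, ?_⟩
      · refine (hg.fun_comp (by fun_prop) ?_).const_mul _
        rintro _ ⟨z, hz, rfl⟩
        refine ⟨ρ * z, hmap' hz, ?_⟩
        simp only
        field_simp
      · intro z hz
        simp only
        rw [mul_inv_cancel_left₀ hMc, hgi _ (hmap' hz), inv_mul_cancel_left₀ hρ0]
    have hXs : Sch (fun z => (ρ:ℂ)⁻¹ * ω (ρ * z)) := by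
      refine ⟨?_, ?_, by simp [hω.zero]⟩
      · exact (hω.diff.fun_comp (by fun_prop) hmap').const_mul _
      · intro z hz
        have hz1 : ‖z‖ < 1 := by simpa using hz
        have := Complex.norm_le_norm_of_mapsTo_ball hω.diff (hω.maps.mono_right ball_subset_closedBall) hω.zero
          (show ‖(ρ:ℂ) * z‖ < 1 by simpa using hmap' hz)
        rw [norm_mul, hρc] at this
        simp only [mem_ball, dist_zero_right, norm_mul, norm_inv, hρc]
        rw [inv_mul_lt_iff₀ hρ.1, mul_one]
        nlinarith [hρ.1]
    have hB := thmB hv hvU hXs n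
    have e1 : (fun z => (M:ℂ)⁻¹ * φ (ρ * ((ρ:ℂ)⁻¹ * ω (ρ * z)))) = fun z => (M:ℂ)⁻¹ * φ (ω (ρ * z)) := by
      funext z; rw [mul_inv_cancel_left₀ hρ0]
    have hanφ : AnalyticAt ℂ φ 0 := hd.analyticAt nhds_D
    have hanc : AnalyticAt ℂ (fun z => φ (ω z)) 0 := an_comp hanφ hω.an hω.zero
    have hρan : AnalyticAt ℂ (fun z : ℂ => (ρ:ℂ) * z) 0 := by fun_prop
    have e2 : co (n+1) (fun z => (M:ℂ)⁻¹ * φ (ω (ρ * z))) = (M:ℂ)⁻¹ * (ρ^(n+1) * co (n+1) (fun z => φ (ω z))) := by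
      rw [co_const_mul (f := fun z => φ (ω (ρ * z))) (an_comp (H := fun z => φ (ω z)) hanc hρan (by simp)),
        co_scale (f := fun z => φ (ω z)) hanc]
    have e3 : deriv (fun z => (M:ℂ)⁻¹ * φ (ρ * z)) 0 = (M:ℂ)⁻¹ * (ρ * deriv φ 0) := by
      rw [← co_one, co_const_mul (f := fun z => φ (ρ * z)) (an_comp hanφ hρan (by simp)), co_scale hanφ, co_one, pow_one]
    rw [e1, e2, e3, norm_mul, norm_mul, norm_mul, norm_mul, norm_pow, hρc, norm_inv, Complex.norm_real,
      Real.norm_of_nonneg hMp.le] at hB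
    rw [← mul_le_mul_iff_right₀ (inv_pos.2 hMp)]
    linarith
  have t1 : Tendsto (fun ρ : ℝ => ρ^(n+1) * ‖co (n+1) (fun z => φ (ω z))‖) (𝓝[<] 1)
      (𝓝 (1^(n+1) * ‖co (n+1) (fun z => φ (ω z))‖)) := by
    apply Tendsto.mono_left _ nhdsWithin_le_nhds
    exact ContinuousAt.tendsto (by fun_prop)
  have t2 : Tendsto (fun ρ : ℝ => (n+1) * (ρ * ‖deriv φ 0‖)) (𝓝[<] 1)
      (𝓝 ((n+1) * (1 * ‖deriv φ 0‖))) := by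
    apply Tendsto.mono_left _ nhdsWithin_le_nhds
    exact ContinuousAt.tendsto (by fun_prop)
  have := le_of_tendsto_of_tendsto t1 t2 (by
    filter_upwards [Ioo_mem_nhdsLT (show (0:ℝ) < 1 by norm_num)] with a ha
    exact key a ha)
  simpa using this

lemma sch_id : Sch (fun z => z) := ⟨differentiableOn_id, fun _ h => h, rfl⟩

/-- Koebe quarter theorem. -/
lemma koebe_quarter {φ : ℂ → ℂ} (hU : Uni φ) (h0 : φ 0 = 0) {w : ℂ} (hw : w ∉ φ '' ball 0 1) :
    ‖deriv φ 0‖ ≤ 4 * ‖w‖ := by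
  have h00 : (0:ℂ) ∈ ball (0:ℂ) 1 := by simp
  have hw0 : w ≠ 0 := by
    rintro rfl; exact hw ⟨0, h00, h0⟩
  have hne : ∀ z ∈ ball (0:ℂ) 1, 1 - w⁻¹ * φ z ≠ 0 := by
    intro z hz h
    apply hw
    refine ⟨z, hz, ?_⟩
    have : w⁻¹ * φ z = 1 := by linear_combination -h
    field_simp at this
    exact this
  have r1 := rogosinski hU h0 sch_id 1
  obtain ⟨hd, g, hg, hgi⟩ := hU
  set ψ : ℂ → ℂ := fun z => φ z / (1 - w⁻¹ * φ z) with hψ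
  have hψd : DifferentiableOn ℂ ψ (ball 0 1) := hd.fun_div ((hd.const_mul _).const_sub _) hne
  have hinv : ∀ z ∈ ball (0:ℂ) 1, ψ z / (1 + w⁻¹ * ψ z) = φ z ∧ 1 + w⁻¹ * ψ z ≠ 0 := by
    intro z hz
    have h1 := hne z hz
    have e : 1 + w⁻¹ * ψ z = 1 / (1 - w⁻¹ * φ z) := by
      simp only [hψ]; rw [eq_div_iff h1, add_mul, mul_assoc, div_mul_cancel₀ _ h1]; ring
    refine ⟨?_, by rw [e]; exact one_div_ne_zero h1⟩
    rw [e]; simp only [hψ]; rw [div_div_div_cancel_right₀ h1, div_one]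
  have hψU : Uni ψ := by
    refine ⟨hψd, fun ζ => g (ζ / (1 + w⁻¹ * ζ)), ?_, ?_⟩
    · refine hg.fun_comp ?_ ?_
      · refine DifferentiableOn.fun_div (by fun_prop) (by fun_prop) ?_
        rintro _ ⟨z, hz, rfl⟩
        exact (hinv z hz).2
      · rintro _ ⟨z, hz, rfl⟩
        simp only
        rw [(hinv z hz).1]
        exact ⟨z, hz, rfl⟩
    · intro z hz
      simp only
      rw [(hinv z hz).1, hgi z hz]
  have hψ0 : ψ 0 = 0 := by simp [hψ, h0]
  have r2 := rogosinski hψU hψ0 sch_id 1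
  have hanφ : AnalyticAt ℂ φ 0 := hd.analyticAt nhds_D
  have hanψ : AnalyticAt ℂ ψ 0 := hψd.analyticAt nhds_D
  have hcong : φ =ᶠ[𝓝 0] fun z => ψ z + (-w⁻¹) * (ψ z * φ z) := by
    filter_upwards [nhds_D] with z hz
    have := hne z hz
    have e : ψ z * (1 - w⁻¹ * φ z) = φ z := div_mul_cancel₀ _ this
    linear_combination -e
  have hs := ser_congr hcong
  have hm : AnalyticAt ℂ (fun z => ψ z * φ z) 0 := hanψ.fun_mul hanφ
  rw [ser_add hanψ (analyticAt_const.fun_mul hm), ser_const_mul _ hm, ser_mul hanψ hanφ] at hs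
  have hd1 : co 1 φ = co 1 ψ := by
    have := congrArg (PowerSeries.coeff 1) hs
    rw [map_add, PowerSeries.coeff_C_mul, PowerSeries.coeff_mul, Finset.Nat.sum_antidiagonal_eq_sum_range_succ_mk] at this
    simp only [Finset.sum_range_succ, Finset.sum_range_zero, coeff_ser, co_zero, hψ0, Nat.sub_self, h0] at this
    rw [this]; ring
  have hd2 : co 2 φ = co 2 ψ - w⁻¹ * (co 1 ψ * co 1 φ) := by
    have := congrArg (PowerSeries.coeff 2) hs
    rw [map_add, PowerSeries.coeff_C_mul, PowerSeries.coeff_mul, Finset.Nat.sum_antidiagonal_eq_sum_range_succ_mk] at this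
    simp only [Finset.sum_range_succ, Finset.sum_range_zero, coeff_ser, co_zero, hψ0, Nat.sub_self, h0] at this
    rw [this]; norm_num; ring
  rw [co_one, co_one] at hd1
  rw [co_one, co_one, ← hd1] at hd2
  norm_num at r1 r2
  rw [← hd1] at r2
  have e : deriv φ 0 * deriv φ 0 = w * (co 2 ψ - co 2 φ) := by
    rw [hd2]; field_simp; ring
  have e2 : ‖deriv φ 0‖ * ‖deriv φ 0‖ ≤ ‖w‖ * (4 * ‖deriv φ 0‖) := by
    rw [← norm_mul, e, norm_mul]
    gcongr
    refine (norm_sub_le _ _).trans ?_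
    linarith
  rcases eq_or_lt_of_le (norm_nonneg (deriv φ 0)) with h | h
  · rw [← h]; positivity
  · nlinarith

end BR

namespace BR
open Filter Topology

section Banach
variable {E Y : Type*} [NormedAddCommGroup E] [NormedSpace ℂ E] [NormedAddCommGroup Y] [NormedSpace ℂ Y]

/-- holomorphic and bounded on a ball -/
structure HB (H : E → Y) (c : E) (R M : ℝ) : Prop where
  diff : DifferentiableOn ℂ H (ball c R)
  bd : ∀ y ∈ ball c R, ‖H y‖ ≤ M

lemma HB.da {H : E → Y} {c : E} {R M : ℝ} (h : HB H c R M) {y : E} (hy : y ∈ ball c R) :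
    DifferentiableAt ℂ H y := h.diff.differentiableAt (isOpen_ball.mem_nhds hy)

lemma HB.l1 {H : E → Y} {c : E} {R M : ℝ} (hR : 0 < R) (h : HB H c R M) {y : E} (hy : y ∈ ball c (R/2)) :
    ‖fderiv ℂ H y‖ ≤ 4*M/R := by
  have hsub : ball y (R/2) ⊆ ball c R := by
    apply ball_subset_ball'
    have := mem_ball.1 hy
    linarith
  have := Complex.norm_fderiv_le_div_of_mapsTo_ball (R₂ := 2*M) (h.diff.mono hsub) (fun z hz => by
    rw [mem_closedBall, dist_eq_norm]
    refine (norm_sub_le _ _).trans ?_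
    have h1 := h.bd z (hsub hz)
    have h2 := h.bd y (hsub (mem_ball_self (by positivity)))
    linarith) (by positivity)
  refine this.trans (le_of_eq ?_)
  field_simp
  ring_nf

lemma HB.lip {H : E → Y} {c : E} {R M : ℝ} (hR : 0 < R) (h : HB H c R M) {x y : E} (hx : x ∈ ball c (R/2))
    (hy : y ∈ ball c (R/2)) : ‖H y - H x‖ ≤ 4*M/R * ‖y - x‖ :=
  (convex_ball c (R/2)).norm_image_sub_le_of_norm_fderiv_le
    (fun z hz => h.da (ball_subset_ball (by linarith) hz)) (fun z hz => h.l1 hR hz) hx hy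

lemma HB.l2 {H : E → Y} {c : E} {R M : ℝ} (hR : 0 < R) (h : HB H c R M) {y k : E} (hy : y ∈ ball c (R/8))
    (hk : ‖k‖ < R/4) : ‖fderiv ℂ H (y + k) - fderiv ℂ H y‖ ≤ 64*M/R^2*‖k‖ := by
  have hm : ∀ z ∈ ball c (R/4), z + k ∈ ball c (R/2) ∧ z ∈ ball c (R/2) := by
    intro z hz
    rw [mem_ball, dist_eq_norm] at hz
    constructor
    · rw [mem_ball, dist_eq_norm]
      calc ‖z + k - c‖ = ‖(z - c) + k‖ := by congr 1; abel
        _ ≤ ‖z - c‖ + ‖k‖ := norm_add_le _ _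
        _ < R/2 := by linarith
    · rw [mem_ball, dist_eq_norm]; linarith
  have hsub : ball c (R/2) ⊆ ball c R := ball_subset_ball (by linarith)
  have h2 : HB (fun z => H (z + k) - H z) c (R/4) (4*M/R*‖k‖) := by
    refine ⟨?_, ?_⟩
    · refine (h.diff.fun_comp (by fun_prop) (fun z hz => hsub (hm z hz).1)).fun_sub
        (h.diff.mono (fun z hz => hsub (hm z hz).2))
    · intro z hz
      have := h.lip hR (hm z hz).2 (hm z hz).1
      simpa using this
  have h3 := h2.l1 (by positivity) (y := y) (by convert hy using 1; ring)
  have hy4 : y ∈ ball c (R/4) := ball_subset_ball (by linarith) hy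
  have e : fderiv ℂ (fun z => H (z + k) - H z) y = fderiv ℂ H (y + k) - fderiv ℂ H y := by
    have d1 : DifferentiableAt ℂ (fun z => H (z + k)) y :=
      DifferentiableAt.fun_comp' (f := fun z => z + k) (g := H) y (h.da (hsub (hm y hy4).1)) (by fun_prop)
    rw [fderiv_fun_sub d1 (h.da (hsub (hm y hy4).2)), fderiv_comp_add_right]
  rw [e] at h3
  refine h3.trans (le_of_eq ?_)
  field_simp
  ring_nf

lemma HB.t2 {H : E → Y} {c : E} {R M : ℝ} (hR : 0 < R) (h : HB H c R M) {y k : E} (hy : y ∈ ball c (R/8))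
    (hk : ‖k‖ < R/4) : ‖H (y + k) - H y - fderiv ℂ H y k‖ ≤ 64*M/R^2*‖k‖^2 := by
  have hM : 0 ≤ M := (norm_nonneg _).trans (h.bd c (mem_ball_self hR))
  have hseg : ∀ z ∈ closedBall y ‖k‖, z ∈ ball c R := by
    intro z hz
    have h1 := mem_ball.1 hy
    have h2 := mem_closedBall.1 hz
    have := dist_triangle z y c
    rw [mem_ball]; linarith
  have := (convex_closedBall y ‖k‖).norm_image_sub_le_of_norm_fderiv_le' (f := H) (C := 64*M/R^2*‖k‖) (φ := fderiv ℂ H y)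
    (x := y) (y := y + k)
    (fun z hz => h.da (hseg z hz)) (fun z hz => by
      have hz' : ‖z - y‖ ≤ ‖k‖ := by rw [← dist_eq_norm]; exact hz
      have := h.l2 hR hy (k := z - y) (by linarith)
      rw [add_sub_cancel] at this
      refine this.trans ?_
      gcongr) (mem_closedBall_self (norm_nonneg _)) (by simp)
  simp only [add_sub_cancel_left] at this
  refine this.trans (le_of_eq (by ring))

lemma HB.dir [CompleteSpace Y] {H : E → Y} {c : E} {R M : ℝ} (hR : 0 < R) (h : HB H c R M) (v : E) :
    HB (fun y => fderiv ℂ H y v) c (R/16) (4*M/R*‖v‖) := by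
  have hM : 0 ≤ M := (norm_nonneg _).trans (h.bd c (mem_ball_self hR))
  refine ⟨?_, fun y hy => ?_⟩
  swap
  · refine ((fderiv ℂ H y).le_opNorm v).trans ?_
    gcongr
    exact h.l1 hR (ball_subset_ball (by linarith) hy)
  -- the approximations
  set δ : ℝ := R / (8 * (‖v‖ + 1)) with hδ
  have hδ0 : 0 < δ := by positivity
  have hδv : δ * ‖v‖ < R / 4 := by
    rw [hδ, div_mul_eq_mul_div, div_lt_div_iff₀ (by positivity) (by norm_num)]
    nlinarith [norm_nonneg v]
  set t : ℕ → ℝ := fun n => δ / (n + 1) with ht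
  have htp : ∀ n, 0 < t n := fun n => by positivity
  have htle : ∀ n, t n ≤ δ := fun n => div_le_self hδ0.le (by linarith [(n.cast_nonneg : (0:ℝ) ≤ n)])
  have htc : ∀ n, ((t n : ℝ) : ℂ) ≠ 0 := fun n => by exact_mod_cast (htp n).ne'
  have htl : Tendsto t atTop (𝓝 0) := by
    have := (tendsto_one_div_add_atTop_nhds_zero_nat (𝕜 := ℝ)).const_mul δ
    simpa [ht, div_eq_mul_inv] using this
  have hnv : ∀ n, ‖((t n : ℝ) : ℂ) • v‖ = t n * ‖v‖ := fun n => by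
    rw [norm_smul, Complex.norm_real, Real.norm_of_nonneg (htp n).le]
  have hnv4 : ∀ n, ‖((t n : ℝ) : ℂ) • v‖ < R/4 := fun n => by
    rw [hnv]
    have := mul_le_mul_of_nonneg_right (htle n) (norm_nonneg v)
    linarith
  set D : ℕ → E → Y := fun n y => ((t n : ℝ) : ℂ)⁻¹ • (H (y + ((t n : ℝ) : ℂ) • v) - H y) with hD
  set C : ℝ := 64*M/R^2*‖v‖^2 with hC
  have hC0 : 0 ≤ C := by positivity
  have hDa : ∀ n, ∀ y ∈ ball c (R/8), ‖D n y - fderiv ℂ H y v‖ ≤ C * t n := by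
    intro n y hy
    have h1 := h.t2 hR hy (hnv4 n)
    have e : D n y - fderiv ℂ H y v = ((t n : ℝ) : ℂ)⁻¹ • (H (y + ((t n : ℝ) : ℂ) • v) - H y -
        fderiv ℂ H y (((t n : ℝ) : ℂ) • v)) := by
      simp only [hD]
      rw [smul_sub _ (H (y + _) - H y), map_smul, smul_smul, inv_mul_cancel₀ (htc n), one_smul]
    rw [e, norm_smul, norm_inv, Complex.norm_real, Real.norm_of_nonneg (htp n).le, inv_mul_le_iff₀ (htp n)]
    refine h1.trans (le_of_eq ?_)
    rw [hnv, hC]; ring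
  have hDd : ∀ n, DifferentiableOn ℂ (D n) (ball c (R/8)) := by
    intro n
    simp only [hD]
    refine DifferentiableOn.const_smul (DifferentiableOn.fun_sub (h.diff.fun_comp (by fun_prop) fun y hy => ?_) (h.diff.mono (ball_subset_ball (by linarith)))) _
    rw [mem_ball, dist_eq_norm] at hy ⊢
    have := hnv4 n
    calc ‖y + ((t n : ℝ) : ℂ) • v - c‖ = ‖(y - c) + ((t n : ℝ) : ℂ) • v‖ := by congr 1; abel
        _ ≤ ‖y - c‖ + ‖((t n : ℝ) : ℂ) • v‖ := norm_add_le _ _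
        _ < R := by linarith
  have hDat : ∀ n, ∀ y ∈ ball c (R/16), HasFDerivAt (D n) (fderiv ℂ (D n) y) y := fun n y hy =>
    ((hDd n).differentiableAt (isOpen_ball.mem_nhds (ball_subset_ball (by linarith) hy))).hasFDerivAt
  have hcau : ∀ m n, ∀ y ∈ ball c (R/16), ‖fderiv ℂ (D m) y - fderiv ℂ (D n) y‖ ≤ 4*(C*(t m + t n))/(R/8) := by
    intro m n y hy
    have hB : HB (fun y => D m y - D n y) c (R/8) (C*(t m + t n)) := by
      refine ⟨(hDd m).fun_sub (hDd n), fun z hz => ?_⟩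
      have h1 := hDa m z hz
      have h2 := hDa n z hz
      calc ‖D m z - D n z‖ = ‖(D m z - fderiv ℂ H z v) - (D n z - fderiv ℂ H z v)‖ := by congr 1; abel
        _ ≤ _ := norm_sub_le _ _
        _ ≤ _ := by linarith
    have := hB.l1 (by positivity) (y := y) (by convert hy using 1; ring)
    rwa [fderiv_fun_sub (hDat m y hy).differentiableAt (hDat n y hy).differentiableAt] at this
  have hUC : UniformCauchySeqOn (fun n y => fderiv ℂ (D n) y) atTop (ball c (R/16)) := by
    rw [Metric.uniformCauchySeqOn_iff]
    intro ε hε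
    have hl : Tendsto (fun n => 4*(C*(2 * t n))/(R/8)) atTop (𝓝 0) := by
      have := (((htl.const_mul 2).const_mul C).const_mul 4).div_const (R/8)
      simpa using this
    obtain ⟨N, hN⟩ := (hl.eventually (gt_mem_nhds hε)).exists
    refine ⟨N, fun m hm n hn y hy => ?_⟩
    rw [dist_eq_norm]
    refine (hcau m n y hy).trans_lt (lt_of_le_of_lt ?_ hN)
    have hanti : ∀ m ≥ N, t m ≤ t N := fun m hm => by
      simp only [ht]
      gcongr
    have := hanti m hm
    have := hanti n hn
    gcongr
    linarith
  have hlim : ∀ y ∈ ball c (R/16), ∃ L, Tendsto (fun n => fderiv ℂ (D n) y) atTop (𝓝 L) := fun y hy =>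
    cauchySeq_tendsto_of_complete (hUC.cauchySeq hy)
  choose! g' hg' using hlim
  have hTU := hUC.tendstoUniformlyOn_of_tendsto hg'
  intro y hy
  refine (hasFDerivAt_of_tendstoUniformlyOn (g := fun y => fderiv ℂ H y v) isOpen_ball hTU hDat ?_ hy).differentiableAt.differentiableWithinAt
  intro z hz
  rw [tendsto_iff_norm_sub_tendsto_zero]
  refine squeeze_zero (fun _ => norm_nonneg _) (fun n => hDa n z (ball_subset_ball (by linarith) hz)) ?_
  simpa using htl.const_mul C

lemma HB.fd [CompleteSpace Y] {H : E → Y} {c : E} {R M : ℝ} (hR : 0 < R) (h : HB H c R M) :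
    DifferentiableAt ℂ (fderiv ℂ H) c := by
  have hM : 0 ≤ M := (norm_nonneg _).trans (h.bd c (mem_ball_self hR))
  have hR16 : 0 < R/16 := by positivity
  have hv := fun v => h.dir hR v
  have hda : ∀ v, DifferentiableAt ℂ (fun y => fderiv ℂ H y v) c := fun v => (hv v).da (mem_ball_self hR16)
  let B0 : E →ₗ[ℂ] (E →L[ℂ] Y) :=
    { toFun := fun v => fderiv ℂ (fun y => fderiv ℂ H y v) c
      map_add' := fun v w => by
        simp only [map_add]
        exact fderiv_fun_add (hda v) (hda w)
      map_smul' := fun a v => by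
        simp only [map_smul]
        exact fderiv_fun_const_smul (hda v) a }
  let B : E →L[ℂ] (E →L[ℂ] Y) := B0.mkContinuous (4*(4*M/R)/(R/16)) (fun v => by
    have := (hv v).l1 hR16 (y := c) (mem_ball_self (by positivity))
    refine this.trans (le_of_eq (by ring)))
  have hB : ∀ v, B v = fderiv ℂ (fun y => fderiv ℂ H y v) c := fun v => rfl
  have key : HasFDerivAt (fderiv ℂ H) B.flip c := by
    rw [hasFDerivAt_iff_isLittleO_nhds_zero]
    have hO : (fun k => fderiv ℂ H (c + k) - fderiv ℂ H c - B.flip k) =O[𝓝 0] fun k => ‖k‖^2 := by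
      refine Asymptotics.IsBigO.of_bound (64*(4*M/R)/(R/16)^2) ?_
      filter_upwards [ball_mem_nhds (0:E) (show 0 < R/16/4 by positivity)] with k hk
      rw [mem_ball, dist_zero_right] at hk
      refine ContinuousLinearMap.opNorm_le_bound _ (by positivity) fun v => ?_
      have := (hv v).t2 hR16 (y := c) (mem_ball_self (by positivity)) hk
      simp only [sub_apply, ContinuousLinearMap.flip_apply, hB]
      refine this.trans (le_of_eq ?_)
      rw [norm_pow, norm_norm]; ring
    refine hO.trans_isLittleO ?_
    refine Asymptotics.IsLittleO.of_norm_right ?_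
    exact (Asymptotics.isLittleO_pow_id (one_lt_two)).comp_tendsto (tendsto_norm_zero)
  exact key.differentiableAt

lemma hol_fderiv [CompleteSpace Y] {H : E → Y} {s : Set E} (hs : IsOpen s) (h : DifferentiableOn ℂ H s) :
    DifferentiableOn ℂ (fderiv ℂ H) s := by
  intro c hc
  have hcont := (h.differentiableAt (hs.mem_nhds hc)).continuousAt
  have h1 : ∀ᶠ y in 𝓝 c, y ∈ s ∧ ‖H y‖ ≤ ‖H c‖ + 1 := by
    filter_upwards [hs.mem_nhds hc, hcont.norm.eventually (ge_mem_nhds (show ‖H c‖ < ‖H c‖ + 1 by linarith))] with y a b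
    exact ⟨a, b⟩
  obtain ⟨R, hR, hb⟩ := Metric.eventually_nhds_iff_ball.1 h1
  exact ((HB.mk (h.mono fun y hy => (hb y hy).1) fun y hy => (hb y hy).2 : HB H c R (‖H c‖+1)).fd hR).differentiableWithinAt

lemma hol_contDiffOn.{u} (n : ℕ) {E : Type u} [NormedAddCommGroup E] [NormedSpace ℂ E]
    {Y : Type u} [NormedAddCommGroup Y] [NormedSpace ℂ Y] [CompleteSpace Y] {H : E → Y} {s : Set E}
    (hs : IsOpen s) (h : DifferentiableOn ℂ H s) : ContDiffOn ℂ n H s := by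
  induction n generalizing Y with
  | zero => simpa [contDiffOn_zero] using h.continuousOn
  | succ n ih =>
    push_cast
    rw [contDiffOn_succ_iff_fderiv_of_isOpen hs]
    exact ⟨h, by simp, ih (hol_fderiv hs h)⟩

end Banach
end BR

namespace BR
open Filter Topology

section Final
variable {X : Type*} [NormedAddCommGroup X] [NormedSpace ℂ X]

lemma slice {a : X} {f g : X → ℂ}
    (hf : DifferentiableOn ℂ f (ball (0 : X) 1))
    {F G : X → X}
    (hF : ∀ x ∈ ball (0 : X) 1, F x = a + f x • x)
    (hG : ∀ x ∈ ball (0 : X) 1, G x = a + g x • x)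
    (hbi : IsBiholoOn F (ball (0 : X) 1))
    (hsub : Subordinate G F) {u : X} (hu : ‖u‖ = 1) :
    (∀ ζ : ℂ, ‖ζ‖ < ‖f 0‖ / 4 → a + ζ • u ∈ F '' ball 0 1) ∧
    ∀ n, ‖co n (fun z => z * g (z • u))‖ ≤ n * ‖f 0‖ := by
  obtain ⟨ℓ, hℓ1, hℓu⟩ := exists_dual_vector ℂ u (by rw [hu]; norm_num)
  rw [hu] at hℓu
  have hℓu' : ℓ u = 1 := by simpa using hℓu
  obtain ⟨hFd, hFi, Fi, hFid, hFii⟩ := hbi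
  obtain ⟨W, hWd, hWm, hW0, hGW⟩ := hsub
  have h00 : (0:X) ∈ ball (0:X) 1 := by simp
  have hzu : MapsTo (fun z : ℂ => z • u) (ball 0 1) (ball 0 1) := by
    intro z hz
    simpa [norm_smul, hu] using hz
  set φ : ℂ → ℂ := fun z => z * f (z • u) with hφ
  have hφd : DifferentiableOn ℂ φ (ball 0 1) :=
    DifferentiableOn.fun_mul differentiableOn_id (hf.fun_comp (by fun_prop) hzu)
  have hFφ : ∀ z ∈ ball (0:ℂ) 1, a + φ z • u = F (z • u) := by
    intro z hz
    rw [hF _ (hzu hz), smul_smul, hφ, mul_comm]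
  have hU : Uni φ := by
    refine ⟨hφd, fun ζ => ℓ (Fi (a + ζ • u)), ?_, ?_⟩
    · refine ℓ.differentiable.comp_differentiableOn (hFid.fun_comp (by fun_prop) ?_)
      rintro _ ⟨z, hz, rfl⟩
      simp only
      rw [hFφ z hz]
      exact mem_image_of_mem _ (hzu hz)
    · intro z hz
      simp only
      rw [hFφ z hz, hFii _ (hzu hz), map_smul, hℓu', smul_eq_mul, mul_one]
  have hφ0 : φ 0 = 0 := by simp [hφ]
  have hderiv : deriv φ 0 = f 0 := by
    have hfd : DifferentiableAt ℂ (fun z : ℂ => f (z • u)) 0 :=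
      (hf.fun_comp (by fun_prop) hzu).differentiableAt nhds_D
    have := (hasDerivAt_id (0:ℂ)).fun_mul hfd.hasDerivAt
    simp only [id] at this
    rw [hφ, this.deriv]; simp
  refine ⟨fun ζ hζ => ?_, fun n => ?_⟩
  · by_contra hcon
    have : ζ ∉ φ '' ball 0 1 := by
      rintro ⟨z, hz, rfl⟩
      exact hcon ⟨z • u, hzu hz, (hFφ z hz).symm⟩
    have := koebe_quarter hU hφ0 this
    rw [hderiv] at this
    linarith
  · set ω : ℂ → ℂ := fun z => ℓ (W (z • u)) with hω
    have hωS : Sch ω := by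
      refine ⟨?_, ?_, by simp [hω, hW0]⟩
      · exact ℓ.differentiable.comp_differentiableOn (hWd.fun_comp (by fun_prop) hzu)
      · intro z hz
        have h1 := hWm (hzu hz)
        rw [mem_ball, dist_zero_right] at h1 ⊢
        have := ℓ.le_opNorm (W (z • u))
        rw [hℓ1, one_mul] at this
        exact this.trans_lt h1
    have hψ : (fun z => z * g (z • u)) =ᶠ[𝓝 0] fun z => φ (ω z) := by
      filter_upwards [nhds_D] with z hz
      have hy := hWm (hzu hz)
      have h1 := hGW _ (hzu hz)
      rw [hG _ (hzu hz), hF _ hy, add_right_inj, smul_smul] at h1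
      have h2 : (z * g (z • u)) = f (W (z • u)) * ω z := by
        have := congrArg ℓ h1
        rw [map_smul, map_smul, hℓu', smul_eq_mul, smul_eq_mul, mul_one] at this
        rw [mul_comm, this]
      by_cases hy0 : W (z • u) = 0
      · rw [h2]
        simp [hω, hy0, hφ]
      · have hfy : f (W (z • u)) ≠ 0 := by
          intro h
          apply hy0
          apply hFi hy h00
          rw [hF _ hy, hF _ h00, h]; simp
        have h3 : W (z • u) = ω z • u := by
          have e : W (z • u) = ((f (W (z • u)))⁻¹ * (g (z • u) * z)) • u := by
            rw [mul_smul, h1, inv_smul_smul₀ hfy]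
          have e2 : ω z = (f (W (z • u)))⁻¹ * (g (z • u) * z) := by
            rw [mul_comm (g _), h2, inv_mul_cancel_left₀ hfy]
          rw [e2]; exact e
        rw [h2]
        simp only [hφ]
        rw [← h3, mul_comm]
    rw [co_congr hψ]
    rcases n with _ | n
    · rw [co_zero, hωS.zero, hφ0]; simp
    · have := rogosinski hU hφ0 hωS n
      rw [hderiv] at this
      push_cast
      exact this

lemma dist_bound {a : X} {f : X → ℂ}
    (hf : DifferentiableOn ℂ f (ball (0 : X) 1))
    {F : X → X}
    (hF : ∀ x ∈ ball (0 : X) 1, F x = a + f x • x)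
    (hbi : IsBiholoOn F (ball (0 : X) 1)) {u : X} (hu : ‖u‖ = 1) :
    ‖f 0‖ / 4 ≤ infDist (F 0) (frontier (F '' ball (0 : X) 1)) := by
  have h00 : (0:X) ∈ ball (0:X) 1 := by simp
  have hF0 : F 0 = a := by rw [hF 0 h00]; simp
  have hsub : Subordinate F F := ⟨fun x => x, differentiableOn_id, fun _ h => h, rfl, fun _ _ => rfl⟩
  have hball : ball a (‖f 0‖/4) ⊆ F '' ball 0 1 := by
    intro y hy
    rw [mem_ball, dist_eq_norm] at hy
    by_cases hya : y = a
    · exact ⟨0, h00, by rw [hF0, hya]⟩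
    · have hn : ‖y - a‖ ≠ 0 := norm_ne_zero_iff.2 (sub_ne_zero.2 hya)
      have hnc : ((‖y - a‖ : ℝ) : ℂ) ≠ 0 := by exact_mod_cast hn
      have hu' : ‖((‖y - a‖ : ℝ) : ℂ)⁻¹ • (y - a)‖ = 1 := by
        rw [norm_smul, norm_inv, Complex.norm_real, norm_norm, inv_mul_cancel₀ hn]
      have := (slice hf hF hF hbi hsub hu').1 ((‖y - a‖ : ℝ) : ℂ) (by simpa using hy)
      rwa [smul_inv_smul₀ hnc, add_sub_cancel] at this
  have hne : (frontier (F '' ball (0 : X) 1)).Nonempty := by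
    rw [nonempty_iff_ne_empty]
    intro he
    rw [← isClopen_iff_frontier_eq_empty] at he
    rcases isClopen_iff.1 he with h | h
    · have : F 0 ∈ F '' ball (0:X) 1 := mem_image_of_mem _ h00
      rw [h] at this; exact this
    · obtain ⟨hFd, hFi, Fi, hFid, hFii⟩ := hbi
      rw [h, differentiableOn_univ] at hFid
      have hb : Bornology.IsBounded (range Fi) := by
        refine (isBounded_ball (x := (0:X)) (r := 1)).subset ?_
        rintro _ ⟨y, rfl⟩
        obtain ⟨x, hx, rfl⟩ : y ∈ F '' ball (0:X) 1 := by rw [h]; trivial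
        rw [hFii x hx]; exact hx
      have hu2 : (1/2:ℂ) • u ∈ ball (0:X) 1 := by
        rw [mem_ball, dist_zero_right, norm_smul, hu]; norm_num
      have := hFid.apply_eq_apply_of_bounded hb (F 0) (F ((1/2:ℂ) • u))
      rw [hFii _ h00, hFii _ hu2] at this
      have h3 := congrArg norm this
      rw [norm_smul, hu] at h3
      norm_num at h3
  rw [le_infDist hne]
  intro y hy
  by_contra hlt
  push Not at hlt
  rw [hF0, dist_comm] at hlt
  have : y ∈ interior (F '' ball 0 1) := interior_maximal hball isOpen_ball hlt
  exact hy.2 this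

end Final

lemma deriv_slice.{v} {X : Type v} [NormedAddCommGroup X] [NormedSpace ℂ X] [CompleteSpace X] {a : X} {g : X → ℂ}
    (hg : DifferentiableOn ℂ g (ball (0 : X) 1)) {G : X → X}
    (hG : ∀ x ∈ ball (0 : X) 1, G x = a + g x • x) {u : X} (hu : ‖u‖ = 1) (n : ℕ) (hn : 1 ≤ n) :
    iteratedFDeriv ℂ n G 0 (fun _ => u) = iteratedDeriv n (fun z => z * g (z • u)) 0 • u := by
  have hzu : MapsTo (fun z : ℂ => z • u) (ball 0 1) (ball 0 1) := by
    intro z hz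
    simpa [norm_smul, hu] using hz
  have hGd : DifferentiableOn ℂ G (ball 0 1) := by
    have : DifferentiableOn ℂ (fun x => a + g x • x) (ball (0:X) 1) :=
      (hg.fun_smul differentiableOn_id).const_add a
    exact this.congr hG
  have hC := hol_contDiffOn n isOpen_ball hGd
  set L : ℂ →L[ℂ] X := ContinuousLinearMap.toSpanSingleton ℂ u with hL
  have hLo : IsOpen (L ⁻¹' ball (0:X) 1) := isOpen_ball.preimage L.continuous
  have h0L : (0:ℂ) ∈ L ⁻¹' ball (0:X) 1 := by simp
  have h1 := L.iteratedFDerivWithin_comp_right hC isOpen_ball.uniqueDiffOn hLo.uniqueDiffOn (x := 0) (by simp) (i := n) le_rfl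
  rw [iteratedFDerivWithin_of_isOpen n hLo h0L, map_zero,
    iteratedFDerivWithin_of_isOpen n isOpen_ball (by simp)] at h1
  have h2 := congrArg (fun T => T (fun _ => (1:ℂ))) h1
  simp only [ContinuousMultilinearMap.compContinuousLinearMap_apply] at h2
  rw [← iteratedDeriv_eq_iteratedFDeriv] at h2
  have hL1 : L 1 = u := by simp [hL]
  rw [hL1] at h2
  rw [← h2]
  have hψd : DifferentiableOn ℂ (fun z => z * g (z • u)) (ball 0 1) :=
    DifferentiableOn.fun_mul differentiableOn_id (hg.fun_comp (by fun_prop) hzu)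
  have hψa : AnalyticAt ℂ (fun z => z * g (z • u)) 0 := hψd.analyticAt nhds_D
  have hc : (G ∘ L) =ᶠ[𝓝 0] fun z => a + (L ∘ (fun z => z * g (z • u))) z := by
    filter_upwards [nhds_D] with z hz
    have : L z = z • u := by simp [hL]
    simp only [Function.comp]
    rw [this, hG _ (hzu hz), smul_smul]
    simp [hL, mul_comm]
  rw [hc.iteratedDeriv_eq n, iteratedDeriv_const_add (by omega), iteratedDeriv_eq_iteratedFDeriv,
    L.iteratedFDeriv_comp_left (n := n) hψa.contDiffAt le_rfl, iteratedDeriv_eq_iteratedFDeriv]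
  simp [hL]

end BR

/-- **Bohr–Rogosinski inequality (case `V = id`).** Let `F(x) = a + f(x)·x` be biholomorphic
on the unit ball `𝔹` of a complex Banach space and let `G(x) = a + g(x)·x` be subordinate
to `F`. Let `N ≥ 1` and `P_s(x) = (1/s!)·DˢG(0)(x,…,x)`. If `r ∈ (0,1)` satisfies
`4r + 4r^N(N(1−r)+r) ≤ (1−r)²`, then for every `x` with `‖x‖ = r`,
`‖G(x)‖ + Σ_{s≥N} ‖P_s(x)‖ ≤ ‖F(0)‖ + dist(F(0), ∂F(𝔹))`. -/
theorem stmt13 {X : Type*} [NormedAddCommGroup X] [NormedSpace ℂ X] [CompleteSpace X]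
    (a : X) (f g : X → ℂ)
    (hf : DifferentiableOn ℂ f (ball (0 : X) 1))
    (hg : DifferentiableOn ℂ g (ball (0 : X) 1))
    (F G : X → X)
    (hF : ∀ x ∈ ball (0 : X) 1, F x = a + f x • x)
    (hG : ∀ x ∈ ball (0 : X) 1, G x = a + g x • x)
    (hbi : IsBiholoOn F (ball (0 : X) 1))
    (hsub : Subordinate G F)
    (N : ℕ) (hN : 1 ≤ N)
    (r : ℝ) (hr : r ∈ Set.Ioo (0 : ℝ) 1)
    (hineq : 4 * r + 4 * r ^ N * ((N : ℝ) * (1 - r) + r) ≤ (1 - r) ^ 2)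
    (x : X) (hx : ‖x‖ = r) :
    Summable (fun s : ℕ =>
        ‖(((N + s).factorial : ℂ))⁻¹ • iteratedFDeriv ℂ (N + s) G 0 (fun _ => x)‖) ∧
    ‖G x‖ +
        ∑' s : ℕ, ‖(((N + s).factorial : ℂ))⁻¹ • iteratedFDeriv ℂ (N + s) G 0 (fun _ => x)‖
      ≤ ‖F 0‖ + infDist (F 0) (frontier (F '' ball (0 : X) 1)) := by
  obtain ⟨hr0, hr1⟩ := hr
  have hrc : (r:ℂ) ≠ 0 := by exact_mod_cast hr0.ne'
  have hrn : ‖(r:ℂ)‖ = r := by rw [Complex.norm_real, Real.norm_of_nonneg hr0.le]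
  set u : X := (r:ℂ)⁻¹ • x with hu_def
  have hu : ‖u‖ = 1 := by rw [hu_def, norm_smul, norm_inv, hrn, hx, inv_mul_cancel₀ hr0.ne']
  have hxu : x = (r:ℂ) • u := by rw [hu_def, smul_inv_smul₀ hrc]
  have h00 : (0:X) ∈ ball (0:X) 1 := by simp
  have hF0 : F 0 = a := by rw [hF 0 h00]; simp
  have hd := BR.dist_bound hf hF hbi hu
  have hco := (BR.slice hf hF hG hbi hsub hu).2
  set ψ : ℂ → ℂ := fun z => z * g (z • u) with hψ
  set A := ‖f 0‖ with hA
  have hA0 : 0 ≤ A := norm_nonneg _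
  have hrnorm : ‖r‖ < 1 := by rw [Real.norm_of_nonneg hr0.le]; exact hr1
  have hP : ∀ s : ℕ, ‖(((N + s).factorial : ℂ))⁻¹ • iteratedFDeriv ℂ (N + s) G 0 (fun _ => x)‖
      ≤ A * ((N * r^N) * r^s + r^N * (s * r^s)) := by
    intro s
    have e := BR.deriv_slice hg hG hu (N + s) (by omega)
    have e2 : iteratedFDeriv ℂ (N + s) G 0 (fun _ => x) = (r:ℂ)^(N+s) • iteratedFDeriv ℂ (N + s) G 0 (fun _ => u) := by
      have := (iteratedFDeriv ℂ (N + s) G 0).map_smul_univ (fun _ => (r:ℂ)) (fun _ => u)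
      rw [hxu, this]; simp
    rw [e2, e, smul_smul, smul_smul, norm_smul, hu, mul_one]
    have e3 : ((N + s).factorial : ℂ)⁻¹ * ((r:ℂ)^(N+s)) * iteratedDeriv (N+s) ψ 0 = (r:ℂ)^(N+s) * BR.co (N+s) ψ := by
      rw [BR.co]; ring
    rw [e3, norm_mul, norm_pow, hrn]
    have := hco (N+s)
    calc r^(N+s) * ‖BR.co (N+s) ψ‖ ≤ r^(N+s) * ((N+s : ℕ) * A) := by gcongr
      _ = _ := by push_cast; ring
  have hsum : HasSum (fun s : ℕ => A * ((N * r^N) * r^s + r^N * (s * r^s)))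
      (A * ((N * r^N) * (1-r)⁻¹ + r^N * (r / (1-r)^2))) :=
    (((hasSum_geometric_of_norm_lt_one hrnorm).mul_left _).add
      ((hasSum_coe_mul_geometric_of_norm_lt_one hrnorm).mul_left _)).mul_left _
  have hS := Summable.of_nonneg_of_le (fun _ => norm_nonneg _) hP hsum.summable
  refine ⟨hS, ?_⟩
  have hts := (hS.tsum_le_tsum hP hsum.summable).trans_eq hsum.tsum_eq
  have hGx : ‖G x‖ ≤ ‖a‖ + A * (r / (1-r)^2) := by
    have hxb : x ∈ ball (0:X) 1 := by simpa [hx] using hr1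
    have hzu : MapsTo (fun z : ℂ => z • u) (ball 0 1) (ball 0 1) := by
      intro z hz
      simpa [norm_smul, hu] using hz
    have hψd : DifferentiableOn ℂ ψ (ball 0 1) :=
      DifferentiableOn.fun_mul differentiableOn_id (hg.fun_comp (by fun_prop) hzu)
    have h1 := BR.summable_ser hψd (z := (r:ℂ)) (by rw [hrn]; exact hr1)
    have h2 := tsum_of_norm_bounded (f := fun k => BR.co k ψ * (r:ℂ)^k) ((hasSum_coe_mul_geometric_of_norm_lt_one hrnorm).mul_left A) (fun k => by
      rw [norm_mul, norm_pow, hrn]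
      have := hco k
      calc ‖BR.co k ψ‖ * r^k ≤ (k * A) * r^k := by gcongr
        _ = _ := by ring)
    rw [h1.tsum_eq] at h2
    rw [hG x hxb]
    refine (norm_add_le _ _).trans ?_
    have e : ‖g x • x‖ = ‖ψ r‖ := by
      simp only [hψ]
      rw [← hxu, norm_smul, norm_mul, hrn, hx, mul_comm]
    rw [e]
    linarith
  have h1r : 0 < 1 - r := by linarith
  have hfin : A * (r / (1-r)^2) + A * ((N * r^N) * (1-r)⁻¹ + r^N * (r / (1-r)^2)) ≤ A / 4 := by
    have e : A * (r / (1-r)^2) + A * ((N * r^N) * (1-r)⁻¹ + r^N * (r / (1-r)^2))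
        = A * ((4 * r + 4 * r ^ N * ((N : ℝ) * (1 - r) + r)) / (1-r)^2) / 4 := by
      field_simp
    rw [e]
    have : (4 * r + 4 * r ^ N * ((N : ℝ) * (1 - r) + r)) / (1-r)^2 ≤ 1 := by
      rw [div_le_one (by positivity)]; exact hineq
    nlinarith
  rw [hF0] at hd ⊢
  linarith
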